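/- arXiv:1805.02604 — 3 statements merged into one kernel-verified Lean document; each statement's English description precedes it below -/
import Mathlib

section
/- Let Ω ⊂ ℝ^N be open and bounded, let F : ℝ × ℝ^N → ℝ be of class C³, let u : ℝ^N → ℝ be bounded and of class C³ with all partial derivatives up to order 3 bounded, and let η, ζ : ℝ^N → ℝ^N be bounded and of class C³ with all partial derivatives up to order 3 bounded. Define Φ_t(x) := x + t·η(x) + (t²/2)·ζ(x), let τ > 0 be such that Φ_t is a bijection of ℝ^N for |t| < τ, and set 𝔄₁(t) := ∫_Ω F(u∘Φ_t⁻¹, ∇(u∘Φ_t⁻¹)) dy. Suppose u is a critical point of A, i.e. for every bounded C³ function φ : ℝ^N → ℝ with bounded derivatives, (d/dt)|_{t=0} ∫_Ω F(u + tφ, ∇u + t∇φ) dx = 0. Then 𝔄₁''(0) = (d²/dt²)|_{t=0} ∫_Ω F(u + t(−∇u·η), ∇(u + t(−∇u·η))) dx; in particular the second inner variation 𝔄₁''(0) does not depend on the acceleration field ζ. -/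
open Filter MeasureTheory Topology
open scoped RealInnerProductSpace

namespace PaperAC

/-- The partial derivative `∂f/∂x_j` of a scalar function on `ℝ^N`. -/
noncomputable def pdv {N : ℕ} (f : (Fin N → ℝ) → ℝ) (j : Fin N) (x : Fin N → ℝ) : ℝ :=
  fderiv ℝ f x (Pi.single j 1)

/-- The advection field `(η·∇)η`, with components `((η·∇)η)^i = ∑_j η^j ∂η^i/∂x_j`. -/
noncomputable def advf {N : ℕ} (η : (Fin N → ℝ) → (Fin N → ℝ)) (x : Fin N → ℝ) :
    Fin N → ℝ :=
  fun i => ∑ j, η x j * pdv (fun z => η z i) j x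

/-- The gradient `∇u` of a scalar function on `ℝ^N`. -/
noncomputable def grad {N : ℕ} (u : (Fin N → ℝ) → ℝ) (x : Fin N → ℝ) : Fin N → ℝ :=
  fun i => pdv u i x

/-- `X₀ := (D²u·η, η) + (∇u, 2(η·∇)η − ζ)`. -/
noncomputable def X0 {N : ℕ} (u : (Fin N → ℝ) → ℝ) (η ζ : (Fin N → ℝ) → (Fin N → ℝ))
    (y : Fin N → ℝ) : ℝ :=
  (∑ i, ∑ j, pdv (pdv u i) j y * η y i * η y j)
    + ∑ i, pdv u i y * (2 * advf η y i - ζ y i)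

/-- `−∇u·η`. -/
noncomputable def nGradDot {N : ℕ} (u : (Fin N → ℝ) → ℝ) (η : (Fin N → ℝ) → (Fin N → ℝ))
    (x : Fin N → ℝ) : ℝ :=
  -(∑ i, pdv u i x * η x i)

/-- `F_z`, the partial derivative of `F = F(z,p)` in the scalar variable. -/
noncomputable def Fz {N : ℕ} (F : ℝ × (Fin N → ℝ) → ℝ) (z : ℝ) (p : Fin N → ℝ) : ℝ :=
  fderiv ℝ F (z, p) (1, 0)

/-- `F_{p_i}`. -/
noncomputable def Fp {N : ℕ} (F : ℝ × (Fin N → ℝ) → ℝ) (i : Fin N) (z : ℝ) (p : Fin N → ℝ) :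
    ℝ :=
  fderiv ℝ F (z, p) (0, Pi.single i 1)

/-- `F_{zz}`. -/
noncomputable def Fzz {N : ℕ} (F : ℝ × (Fin N → ℝ) → ℝ) (z : ℝ) (p : Fin N → ℝ) : ℝ :=
  fderiv ℝ (fun q => fderiv ℝ F q (1, 0)) (z, p) (1, 0)

/-- `F_{z p_i}`. -/
noncomputable def Fzp {N : ℕ} (F : ℝ × (Fin N → ℝ) → ℝ) (i : Fin N) (z : ℝ) (p : Fin N → ℝ) :
    ℝ :=
  fderiv ℝ (fun q => fderiv ℝ F q ((0 : ℝ), Pi.single i 1)) (z, p) (1, 0)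

/-- `F_{p_i p_j}`. -/
noncomputable def Fpp {N : ℕ} (F : ℝ × (Fin N → ℝ) → ℝ) (i j : Fin N) (z : ℝ)
    (p : Fin N → ℝ) : ℝ :=
  fderiv ℝ (fun q => fderiv ℝ F q ((0 : ℝ), Pi.single j 1)) (z, p) ((0 : ℝ), Pi.single i 1)

/-- `𝔄₁(t) = A(u ∘ Φ_t⁻¹) = ∫_Ω F(u_t, ∇u_t)`, the inner deformation of the functional
`A(w) := ∫_Ω F(w, ∇w)`. -/
noncomputable def innerA {N : ℕ} (Ω : Set (Fin N → ℝ)) (F : ℝ × (Fin N → ℝ) → ℝ)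
    (u : (Fin N → ℝ) → ℝ) (Φ : ℝ → (Fin N → ℝ) → (Fin N → ℝ)) (t : ℝ) : ℝ :=
  ∫ y in Ω, F (u (Function.invFun (Φ t) y),
      grad (fun z => u (Function.invFun (Φ t) z)) y)

/-- `t ↦ A(u + tφ) = ∫_Ω F(u + tφ, ∇u + t∇φ)`, the outer deformation of the functional
`A(w) := ∫_Ω F(w, ∇w)`. -/
noncomputable def gateauxA {N : ℕ} (Ω : Set (Fin N → ℝ)) (F : ℝ × (Fin N → ℝ) → ℝ)
    (u φ : (Fin N → ℝ) → ℝ) (t : ℝ) : ℝ :=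
  ∫ x in Ω, F (u x + t * φ x, fun i => pdv u i x + t * pdv φ i x)

/-- The matrix `M_t(x)` with entries `δ_{ij} + t ∂η^i/∂x_j + (t²/2) ∂W^i/∂x_j`. -/
noncomputable def defMat {N : ℕ} (η W : (Fin N → ℝ) → (Fin N → ℝ)) (t : ℝ)
    (x : Fin N → ℝ) : Matrix (Fin N) (Fin N) ℝ :=
  Matrix.of fun i j =>
    (if i = j then (1 : ℝ) else 0) + t * pdv (fun z => η z i) j x
      + (t ^ 2 / 2) * pdv (fun z => W z i) j x

/-- `Φ(a) := ∫_0^a |s² − 1| ds`. -/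
noncomputable def PhiAC (a : ℝ) : ℝ := ∫ s in (0 : ℝ)..a, |s ^ 2 - 1|

/-- All partial derivatives (= iterated Fréchet derivatives) of `f` up to order `n` are
bounded; the case `i = 0` says `f` itself is bounded. -/
def BddUpTo {N : ℕ} {E : Type*} [NormedAddCommGroup E] [NormedSpace ℝ E]
    (n : ℕ) (f : (Fin N → ℝ) → E) : Prop :=
  ∀ i : ℕ, i ≤ n → ∃ C : ℝ, ∀ x, ‖iteratedFDeriv ℝ i f x‖ ≤ C

/-!
Differentiating `A(w(t, ·))` twice at `t = 0` along a curve `w` through `u` gives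
`d²A(u, ẇ) + dA(u, ẅ)`. At a critical point the second term vanishes, so the second derivative
depends only on the velocity `ẇ`, and it may be computed along the straight line `u + t ẇ` instead.

For `w(t, ·) = u ∘ Φ_t⁻¹`, differentiating `w(t, Φ_t x) = u x` gives `ẇ = −Du·η`, and `ζ` enters
only `ẅ`. Since `ẅ` involves two derivatives of `u` it is merely `C¹`, hence not an admissible test
direction; but `dA(u, ·)` is continuous for `C¹` convergence, so it vanishes on `C¹` maps once it
vanishes on smooth ones. The inverse `Φ_t⁻¹` is regular in `(t, y)` jointly by the implicit function
theorem at `t = 0`, where `Φ_0 = id`.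
-/

open scoped ContDiff

section DifferentiationUnderTheIntegral

variable {X V W : Type*} [TopologicalSpace X]
  [NormedAddCommGroup V] [NormedSpace ℝ V] [NormedAddCommGroup W] [NormedSpace ℝ W]

/-- `f' = ∂f/∂t` on the set `U` of space-time points, with `f` and `f'` jointly continuous on `U`:
the regularity in which `t ↦ ∫ f(t, x) dx` can be differentiated under the integral sign. -/
structure HasContTimeDerivOn (f f' : ℝ × X → V) (U : Set (ℝ × X)) : Prop where
  continuousOn : ContinuousOn f U
  continuousOn_deriv : ContinuousOn f' U
  hasDerivAt : ∀ p ∈ U, HasDerivAt (fun s => f (s, p.2)) (f' p) p.1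

namespace HasContTimeDerivOn

variable {f f' f'' : ℝ × X → V} {U : Set (ℝ × X)}

lemma comp_contDiff {G : V → W} (hG : ContDiff ℝ 1 G) (h : HasContTimeDerivOn f f' U) :
    HasContTimeDerivOn (fun p => G (f p)) (fun p => fderiv ℝ G (f p) (f' p)) U where
  continuousOn := hG.continuous.comp_continuousOn h.continuousOn
  continuousOn_deriv :=
    ((hG.continuous_fderiv one_ne_zero).comp_continuousOn h.continuousOn).clm_apply
      h.continuousOn_deriv
  hasDerivAt p hp :=
    (hG.differentiable one_ne_zero _).hasFDerivAt.comp_hasDerivAt _ (h.hasDerivAt p hp)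

lemma clm_apply {L L' : ℝ × X → V →L[ℝ] W} (hL : HasContTimeDerivOn L L' U)
    (h : HasContTimeDerivOn f f' U) :
    HasContTimeDerivOn (fun p => L p (f p)) (fun p => L' p (f p) + L p (f' p)) U where
  continuousOn := hL.continuousOn.clm_apply h.continuousOn
  continuousOn_deriv := (hL.continuousOn_deriv.clm_apply h.continuousOn).add
    (hL.continuousOn.clm_apply h.continuousOn_deriv)
  hasDerivAt p hp := (hL.hasDerivAt p hp).clm_apply (h.hasDerivAt p hp)

lemma fderiv_comp_apply {G : V → W} (hG : ContDiff ℝ 2 G) (h : HasContTimeDerivOn f f' U)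
    (h' : HasContTimeDerivOn f' f'' U) :
    HasContTimeDerivOn (fun p => fderiv ℝ G (f p) (f' p))
      (fun p => fderiv ℝ (fderiv ℝ G) (f p) (f' p) (f' p) + fderiv ℝ G (f p) (f'' p)) U :=
  (h.comp_contDiff (hG.fderiv_right (by norm_num))).clm_apply h'

variable [T2Space X] [MeasurableSpace X] [OpensMeasurableSpace X]
  {μ : Measure X} [IsFiniteMeasureOnCompacts μ] {Ω K : Set X} {t : ℝ}

lemma hasDerivAt_setIntegral (h : HasContTimeDerivOn f f' U) (hU : IsOpen U) (hK : IsCompact K)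
    (hKU : {t} ×ˢ K ⊆ U) (hΩ : MeasurableSet Ω) (hΩK : Ω ⊆ K) :
    HasDerivAt (fun s => ∫ x in Ω, f (s, x) ∂μ) (∫ x in Ω, f' (t, x) ∂μ) t := by
  obtain ⟨I, J, hI, -, htI, hKJ, hIJ⟩ := generalized_tube_lemma isCompact_singleton hK hU hKU
  obtain ⟨r, hr, hrI⟩ := Metric.nhds_basis_closedBall.mem_iff.1
    (hI.mem_nhds (Set.singleton_subset_iff.1 htI))
  have hball : Metric.closedBall t r ×ˢ K ⊆ U := (Set.prod_mono hrI hKJ).trans hIJ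
  obtain ⟨C, hC⟩ := ((isCompact_closedBall t r).prod hK).exists_bound_of_continuousOn
    (h.continuousOn_deriv.mono hball)
  have integrableOn_slice {g : ℝ × X → V} (hg : ContinuousOn g U) {s : ℝ}
      (hs : s ∈ Metric.closedBall t r) : IntegrableOn (fun x => g (s, x)) Ω μ :=
    ((hg.comp (by fun_prop) fun x hx => hball ⟨hs, hx⟩).integrableOn_compact hK).mono_set hΩK
  have ht : t ∈ Metric.closedBall t r := Metric.mem_closedBall_self hr.le
  refine (hasDerivAt_integral_of_dominated_loc_of_deriv_le (F := fun s x => f (s, x))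
    (F' := fun s x => f' (s, x)) (bound := fun _ => C) (Metric.closedBall_mem_nhds t hr) ?_
    (integrableOn_slice h.continuousOn ht)
    (integrableOn_slice h.continuousOn_deriv ht).aestronglyMeasurable ?_ ?_ ?_).2
  · filter_upwards [Metric.closedBall_mem_nhds t hr] with s hs
    exact (integrableOn_slice h.continuousOn hs).aestronglyMeasurable
  · filter_upwards [ae_restrict_mem hΩ] with x hx s hs using hC (s, x) ⟨hs, hΩK hx⟩
  · exact (continuousOn_const.integrableOn_compact hK).mono_set hΩK
  · filter_upwards [ae_restrict_mem hΩ] with x hx s hs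
      using h.hasDerivAt (s, x) (hball ⟨hs, hΩK hx⟩)

lemma deriv_deriv_setIntegral (h : HasContTimeDerivOn f f' U) (h' : HasContTimeDerivOn f' f'' U)
    (hU : IsOpen U) (hK : IsCompact K) (hKU : {t} ×ˢ K ⊆ U) (hΩ : MeasurableSet Ω)
    (hΩK : Ω ⊆ K) :
    deriv (deriv fun s => ∫ x in Ω, f (s, x) ∂μ) t = ∫ x in Ω, f'' (t, x) ∂μ := by
  obtain ⟨I, J, hI, -, htI, hKJ, hIJ⟩ := generalized_tube_lemma isCompact_singleton hK hU hKU
  refine ((h'.hasDerivAt_setIntegral hU hK hKU hΩ hΩK).congr_of_eventuallyEq ?_).deriv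
  filter_upwards [hI.mem_nhds (Set.singleton_subset_iff.1 htI)] with s hs
  exact (h.hasDerivAt_setIntegral hU hK ((Set.prod_mono (Set.singleton_subset_iff.2 hs) hKJ).trans
    hIJ) hΩ hΩK).deriv

end HasContTimeDerivOn

end DifferentiationUnderTheIntegral

section Jets

variable {E V : Type*} [NormedAddCommGroup E] [NormedSpace ℝ E]
  [NormedAddCommGroup V] [NormedSpace ℝ V]

/-- The first-order jet `(w, Dw)` of a map `w`, with the full derivative in place of the vector of
partial derivatives so that no coordinates on `E` are needed. -/
noncomputable def jet (w : E → V) (x : E) : V × (E →L[ℝ] V) := (w x, fderiv ℝ w x)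

lemma continuous_jet {w : E → V} (hw : ContDiff ℝ 1 w) : Continuous (jet w) :=
  hw.continuous.prodMk (hw.continuous_fderiv one_ne_zero)

lemma jet_add_smul {u φ : E → V} {x : E} (hu : DifferentiableAt ℝ u x)
    (hφ : DifferentiableAt ℝ φ x) (t : ℝ) : jet (u + t • φ) x = jet u x + t • jet φ x := by
  simp [jet, fderiv_add hu (hφ.const_smul t), fderiv_const_smul hφ]

/-- The time derivative `∂w/∂t` of a map `w` of space-time `ℝ × E`, as the directional derivative
along `(1, 0)`, so that it inherits joint regularity from `w`. -/
noncomputable def timeDeriv (w : ℝ × E → V) (p : ℝ × E) : V := fderiv ℝ w p (1, 0)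

lemma hasDerivAt_timeDeriv {w : ℝ × E → V} {p : ℝ × E} (hw : DifferentiableAt ℝ w p) :
    HasDerivAt (fun s => w (s, p.2)) (timeDeriv w p) p.1 :=
  hw.hasFDerivAt.comp_hasDerivAt p.1 ((hasDerivAt_id p.1).prodMk (hasDerivAt_const p.1 p.2))

lemma contDiffAt_timeDeriv {w : ℝ × E → V} {p : ℝ × E} {m n : WithTop ℕ∞}
    (hw : ContDiffAt ℝ n w p) (hmn : m + 1 ≤ n) : ContDiffAt ℝ m (timeDeriv w) p :=
  (hw.fderiv_right hmn).clm_apply contDiffAt_const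

lemma fderiv_slice {𝕜 P E V : Type*} [NontriviallyNormedField 𝕜] [NormedAddCommGroup P]
    [NormedSpace 𝕜 P] [NormedAddCommGroup E] [NormedSpace 𝕜 E] [NormedAddCommGroup V]
    [NormedSpace 𝕜 V] {w : P × E → V} {p : P × E} (hw : DifferentiableAt 𝕜 w p) :
    fderiv 𝕜 (fun y => w (p.1, y)) p.2 = fderiv 𝕜 w p ∘L .inr 𝕜 P E :=
  (hw.hasFDerivAt.comp p.2 (hasFDerivAt_prodMk_right p.1 p.2)).fderiv

lemma contDiff_slice {w : ℝ × E → V} {t : ℝ} {n : WithTop ℕ∞}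
    (hw : ∀ x, ContDiffAt ℝ n w (t, x)) : ContDiff ℝ n fun x => w (t, x) :=
  contDiff_iff_contDiffAt.2 fun x => (hw x).comp x (contDiffAt_const.prodMk contDiffAt_id)

lemma fderiv_timeDeriv_apply {w : ℝ × E → V} {p : ℝ × E}
    (hDw : DifferentiableAt ℝ (fderiv ℝ w) p) (q : ℝ × E) :
    fderiv ℝ (timeDeriv w) p q = fderiv ℝ (fderiv ℝ w) p q (1, 0) := by
  unfold timeDeriv
  rw [fderiv_clm_apply hDw (differentiableAt_const _)]
  simp

lemma fderiv_timeDeriv_slice {w : ℝ × E → V} {p : ℝ × E} (hw : ContDiffAt ℝ 2 w p) :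
    fderiv ℝ (fun y => timeDeriv w (p.1, y)) p.2
      = timeDeriv (fun q => fderiv ℝ w q ∘L .inr ℝ ℝ E) p := by
  have hDw : DifferentiableAt ℝ (fderiv ℝ w) p :=
    (hw.fderiv_right (m := 1) (by norm_num)).differentiableAt one_ne_zero
  have hsymm : IsSymmSndFDerivAt ℝ w p := hw.isSymmSndFDerivAt (by simp)
  rw [fderiv_slice ((contDiffAt_timeDeriv hw (m := 1) (by norm_num)).differentiableAt one_ne_zero)]
  ext v
  calc fderiv ℝ (timeDeriv w) p (0, v)
      = fderiv ℝ (fderiv ℝ w) p (0, v) (1, 0) := fderiv_timeDeriv_apply hDw _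
    _ = fderiv ℝ (fderiv ℝ w) p (1, 0) (0, v) := hsymm.eq _ _
    _ = timeDeriv (fun q => fderiv ℝ w q ∘L .inr ℝ ℝ E) p v := by
      simp [timeDeriv, fderiv_clm_comp hDw (differentiableAt_const _)]

lemma hasContTimeDerivOn_jet_slice {w : ℝ × E → V} {U : Set (ℝ × E)} (hU : IsOpen U)
    (hw : ∀ p ∈ U, ContDiffAt ℝ 2 w p) :
    HasContTimeDerivOn (fun p => jet (fun y => w (p.1, y)) p.2)
      (fun p => jet (fun y => timeDeriv w (p.1, y)) p.2) U := by
  have hDw (p) (hp : p ∈ U) : ContDiffAt ℝ 1 (fun q => fderiv ℝ w q ∘L .inr ℝ ℝ E) p :=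
    ((hw p hp).fderiv_right (by norm_num)).clm_comp contDiffAt_const
  have jet_eq (p) (hp : p ∈ U) :
      jet (fun y => w (p.1, y)) p.2 = (w p, fderiv ℝ w p ∘L .inr ℝ ℝ E) :=
    Prod.ext rfl (fderiv_slice ((hw p hp).differentiableAt two_ne_zero))
  have jet_timeDeriv_eq (p) (hp : p ∈ U) : jet (fun y => timeDeriv w (p.1, y)) p.2
      = (timeDeriv w p, timeDeriv (fun q => fderiv ℝ w q ∘L .inr ℝ ℝ E) p) :=
    Prod.ext rfl (fderiv_timeDeriv_slice (hw p hp))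
  refine ⟨ContinuousOn.congr (fun p hp => ?_) jet_eq,
    ContinuousOn.congr (fun p hp => ?_) jet_timeDeriv_eq, fun p hp => ?_⟩
  · exact ((hw p hp).continuousAt.prodMk (hDw p hp).continuousAt).continuousWithinAt
  · exact ((contDiffAt_timeDeriv (hw p hp) (m := 1) (by norm_num)).continuousAt.prodMk
      (contDiffAt_timeDeriv (hDw p hp) (m := 0) (by norm_num)).continuousAt).continuousWithinAt
  · rw [jet_timeDeriv_eq p hp]
    refine ((hasDerivAt_timeDeriv ((hw p hp).differentiableAt two_ne_zero)).prodMk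
      (hasDerivAt_timeDeriv ((hDw p hp).differentiableAt one_ne_zero))).congr_of_eventuallyEq ?_
    filter_upwards [(Continuous.prodMk_left p.2).continuousAt.preimage_mem_nhds
      (hU.mem_nhds hp)] with s hs using jet_eq (s, p.2) hs

lemma hasContTimeDerivOn_jet_add_smul {u φ : E → V} (hu : ContDiff ℝ 1 u) (hφ : ContDiff ℝ 1 φ) :
    HasContTimeDerivOn (fun p : ℝ × E => jet (u + p.1 • φ) p.2) (fun p => jet φ p.2) .univ := by
  have jet_eq (p : ℝ × E) : jet (u + p.1 • φ) p.2 = jet u p.2 + p.1 • jet φ p.2 :=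
    jet_add_smul (hu.differentiable one_ne_zero _) (hφ.differentiable one_ne_zero _) _
  have hju := continuous_jet hu
  have hjφ := continuous_jet hφ
  simp only [jet_eq]
  refine ⟨by fun_prop, by fun_prop, fun p _ => ?_⟩
  simpa using ((hasDerivAt_id p.1).smul_const (jet φ p.2)).const_add (jet u p.2)

end Jets

section Variations

lemma integrableOn_of_isBounded {X V : Type*} [MetricSpace X] [ProperSpace X]
    [MeasurableSpace X] [OpensMeasurableSpace X] [NormedAddCommGroup V] {μ : Measure X}
    [IsFiniteMeasureOnCompacts μ] {f : X → V} {s : Set X} (hf : Continuous f)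
    (hs : Bornology.IsBounded s) : IntegrableOn f s μ :=
  (hf.continuousOn.integrableOn_compact hs.isCompact_closure).mono_set subset_closure

variable {E V : Type*} [NormedAddCommGroup E] [NormedSpace ℝ E] [FiniteDimensional ℝ E]
  [MeasurableSpace E] [BorelSpace E] [NormedAddCommGroup V] [NormedSpace ℝ V]

/-- The functional `A(w) = ∫_Ω G(w, Dw) dμ` with Lagrangian `G`. -/
noncomputable def action (μ : Measure E) (Ω : Set E) (G : V × (E →L[ℝ] V) → ℝ) (w : E → V) : ℝ :=
  ∫ x in Ω, G (jet w x) ∂μ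

/-- The first Gateaux variation `dA(u, φ)`, as the integral expression linear in `φ`. -/
noncomputable def firstVariation (μ : Measure E) (Ω : Set E) (G : V × (E →L[ℝ] V) → ℝ)
    (u φ : E → V) : ℝ :=
  ∫ x in Ω, fderiv ℝ G (jet u x) (jet φ x) ∂μ

/-- The second Gateaux variation `d²A(u, φ)`, as the integral expression quadratic in `φ`. -/
noncomputable def secondVariation (μ : Measure E) (Ω : Set E) (G : V × (E →L[ℝ] V) → ℝ)
    (u φ : E → V) : ℝ :=
  ∫ x in Ω, fderiv ℝ (fderiv ℝ G) (jet u x) (jet φ x) (jet φ x) ∂μ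

variable {μ : Measure E} [IsFiniteMeasureOnCompacts μ] {Ω : Set E}
  {G : V × (E →L[ℝ] V) → ℝ} {u φ : E → V}

lemma integrableOn_fderiv_jet (hΩ : Bornology.IsBounded Ω) (hG : ContDiff ℝ 1 G)
    (hu : ContDiff ℝ 1 u) (hφ : ContDiff ℝ 1 φ) :
    IntegrableOn (fun x => fderiv ℝ G (jet u x) (jet φ x)) Ω μ :=
  integrableOn_of_isBounded (((hG.continuous_fderiv one_ne_zero).comp (continuous_jet hu)).clm_apply
    (continuous_jet hφ)) hΩ

lemma integrableOn_fderiv_fderiv_jet (hΩ : Bornology.IsBounded Ω) (hG : ContDiff ℝ 2 G)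
    (hu : ContDiff ℝ 1 u) (hφ : ContDiff ℝ 1 φ) :
    IntegrableOn (fun x => fderiv ℝ (fderiv ℝ G) (jet u x) (jet φ x) (jet φ x)) Ω μ :=
  have hDG : ContDiff ℝ 1 (fderiv ℝ G) := hG.fderiv_right (by norm_num)
  integrableOn_of_isBounded ((((hDG.continuous_fderiv one_ne_zero).comp
    (continuous_jet hu)).clm_apply (continuous_jet hφ)).clm_apply (continuous_jet hφ)) hΩ

theorem deriv_action_add_smul (hΩ : MeasurableSet Ω) (hΩb : Bornology.IsBounded Ω)
    (hG : ContDiff ℝ 1 G) (hu : ContDiff ℝ 1 u) (hφ : ContDiff ℝ 1 φ) :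
    deriv (fun t : ℝ => action μ Ω G (u + t • φ)) 0 = firstVariation μ Ω G u φ := by
  have h := ((hasContTimeDerivOn_jet_add_smul hu hφ).comp_contDiff hG).hasDerivAt_setIntegral
    (μ := μ) (t := 0) isOpen_univ hΩb.isCompact_closure (Set.subset_univ _) hΩ subset_closure
  simpa only [action, firstVariation, zero_smul, add_zero] using h.deriv

theorem deriv_deriv_action_add_smul (hΩ : MeasurableSet Ω) (hΩb : Bornology.IsBounded Ω)
    (hG : ContDiff ℝ 2 G) (hu : ContDiff ℝ 1 u) (hφ : ContDiff ℝ 1 φ) :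
    deriv (deriv fun t : ℝ => action μ Ω G (u + t • φ)) 0 = secondVariation μ Ω G u φ := by
  have hjet := hasContTimeDerivOn_jet_add_smul hu hφ
  have hjet' : HasContTimeDerivOn (fun p : ℝ × E => jet φ p.2) 0 .univ :=
    ⟨hjet.continuousOn_deriv, continuousOn_const, fun p _ => hasDerivAt_const p.1 (jet φ p.2)⟩
  have h := (hjet.comp_contDiff (hG.of_le one_le_two)).deriv_deriv_setIntegral (μ := μ) (t := 0)
    (hjet.fderiv_comp_apply hG hjet') isOpen_univ hΩb.isCompact_closure (Set.subset_univ _) hΩ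
    subset_closure
  simpa only [action, secondVariation, zero_smul, add_zero, Pi.zero_apply, map_zero] using h

theorem deriv_deriv_action {w : ℝ × E → V} (hΩ : MeasurableSet Ω) (hΩb : Bornology.IsBounded Ω)
    (hG : ContDiff ℝ 2 G) (hw : ∀ x, ContDiffAt ℝ 3 w (0, x)) :
    deriv (deriv fun t => action μ Ω G fun x => w (t, x)) 0
      = secondVariation μ Ω G (fun x => w (0, x)) (fun x => timeDeriv w (0, x))
        + firstVariation μ Ω G (fun x => w (0, x)) (fun x => timeDeriv (timeDeriv w) (0, x)) := by
  let U : Set (ℝ × E) := {p | ContDiffAt ℝ 3 w p}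
  have hU : IsOpen U := isOpen_iff_mem_nhds.2 fun p hp => ContDiffAt.eventually hp (by decide)
  have hU₀ : {0} ×ˢ closure Ω ⊆ U := by rintro ⟨_, x⟩ ⟨rfl, -⟩; exact hw x
  have hwt {p} (hp : ContDiffAt ℝ 3 w p) : ContDiffAt ℝ 2 (timeDeriv w) p :=
    contDiffAt_timeDeriv hp (by norm_num)
  have hwtt {p} (hp : ContDiffAt ℝ 3 w p) : ContDiffAt ℝ 1 (timeDeriv (timeDeriv w)) p :=
    contDiffAt_timeDeriv (hwt hp) (by norm_num)
  have hjet := hasContTimeDerivOn_jet_slice hU fun p (hp : ContDiffAt ℝ 3 w p) =>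
    hp.of_le (by norm_num)
  have hjet' := hasContTimeDerivOn_jet_slice hU fun p hp => hwt hp
  have hw₀ : ContDiff ℝ 1 fun x => w (0, x) := (contDiff_slice hw).of_le (by norm_num)
  have hwt₀ : ContDiff ℝ 1 fun x => timeDeriv w (0, x) :=
    (contDiff_slice fun x => hwt (hw x)).of_le one_le_two
  have hwtt₀ : ContDiff ℝ 1 fun x => timeDeriv (timeDeriv w) (0, x) :=
    contDiff_slice fun x => hwtt (hw x)
  rw [secondVariation, firstVariation, ← integral_add
    (integrableOn_fderiv_fderiv_jet hΩb hG hw₀ hwt₀)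
    (integrableOn_fderiv_jet hΩb (hG.of_le one_le_two) hw₀ hwtt₀)]
  exact (hjet.comp_contDiff (hG.of_le one_le_two)).deriv_deriv_setIntegral
    (hjet.fderiv_comp_apply hG hjet') hU hΩb.isCompact_closure hU₀ hΩ subset_closure

end Variations

section Density

variable {E V : Type*} [NormedAddCommGroup E] [NormedSpace ℝ E] [FiniteDimensional ℝ E]
  [NormedAddCommGroup V] [NormedSpace ℝ V]

lemma exists_hasCompactSupport_eqOn_ball {X : E → V} (hX : ContDiff ℝ 1 X) {R : ℝ} (hR : 0 < R) :
    ∃ Y : E → V, ContDiff ℝ 1 Y ∧ HasCompactSupport Y ∧ Set.EqOn Y X (Metric.ball 0 R) := by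
  let χ : ContDiffBump (0 : E) := ⟨R, R + 1, hR, by linarith⟩
  refine ⟨fun x => χ x • X x, χ.contDiff.smul hX, χ.hasCompactSupport.smul_right, fun x hx => ?_⟩
  simp [χ.one_of_mem_closedBall (Metric.ball_subset_closedBall hx)]

variable [MeasurableSpace E] [BorelSpace E]

lemma dist_jet_normed_convolution_le [CompleteSpace V] {Y : E → V} (hY : ContDiff ℝ 1 Y)
    (hc : HasCompactSupport Y) (ρ : ContDiffBump (0 : E)) (ν : Measure E) [ν.IsAddHaarMeasure]
    {x : E} {δ : ℝ} (h : ∀ z ∈ Metric.ball x ρ.rOut, dist (jet Y z) (jet Y x) ≤ δ) :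
    dist (jet (convolution (ρ.normed ν) Y (.lsmul ℝ ℝ) ν) x) (jet Y x) ≤ δ := by
  have hDY : Continuous (fderiv ℝ Y) := hY.continuous_fderiv one_ne_zero
  have hfderiv : fderiv ℝ (convolution (ρ.normed ν) Y (.lsmul ℝ ℝ) ν) x
      = convolution (ρ.normed ν) (fderiv ℝ Y) (.lsmul ℝ ℝ) ν x := by
    have hprecompR : (ContinuousLinearMap.lsmul ℝ ℝ : ℝ →L[ℝ] V →L[ℝ] V).precompR E
        = .lsmul ℝ ℝ := by
      ext; simp
    rw [(hc.hasFDerivAt_convolution_right _ ρ.continuous_normed.locallyIntegrable hY x).fderiv,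
      hprecompR]
  refine max_le ?_ ?_
  · exact ρ.dist_normed_convolution_le hY.continuous.aestronglyMeasurable fun z hz =>
      (le_max_left _ _).trans (h z hz)
  · simp only [jet]
    rw [hfderiv]
    exact ρ.dist_normed_convolution_le hDY.aestronglyMeasurable fun z hz =>
      (le_max_right _ _).trans (h z hz)

lemma exists_contDiff_hasCompactSupport_dist_jet_le [CompleteSpace V] {Y : E → V}
    (hY : ContDiff ℝ 1 Y) (hc : HasCompactSupport Y) {δ : ℝ} (hδ : 0 < δ) :
    ∃ φ : E → V, ContDiff ℝ ∞ φ ∧ HasCompactSupport φ ∧ ∀ x, dist (jet φ x) (jet Y x) ≤ δ := by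
  have hjet : HasCompactSupport (jet Y) :=
    hc.comp₂_left (m := Prod.mk) (hc.fderiv ℝ) rfl
  obtain ⟨r, hr, hYr⟩ := Metric.uniformContinuous_iff.1
    (hjet.uniformContinuous_of_continuous (continuous_jet hY)) δ hδ
  let ρ : ContDiffBump (0 : E) := ⟨r / 2, r, half_pos hr, half_lt_self hr⟩
  let ν : Measure E := Measure.addHaar
  exact ⟨convolution (ρ.normed ν) Y (.lsmul ℝ ℝ) ν,
    ρ.hasCompactSupport_normed.contDiff_convolution_left _ ρ.contDiff_normed
      hY.continuous.locallyIntegrable,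
    ρ.hasCompactSupport_normed.convolution _ hc,
    fun x => dist_jet_normed_convolution_le hY hc ρ ν fun z hz => (hYr hz).le⟩

variable {μ : Measure E} [IsFiniteMeasureOnCompacts μ] {Ω : Set E}
  {G : V × (E →L[ℝ] V) → ℝ} {u : E → V}

lemma exists_dist_firstVariation_le (hΩb : Bornology.IsBounded Ω)
    (hG : ContDiff ℝ 1 G) (hu : ContDiff ℝ 1 u) :
    ∃ C, ∀ φ Y : E → V, ContDiff ℝ 1 φ → ContDiff ℝ 1 Y → ∀ δ,
      (∀ x, dist (jet φ x) (jet Y x) ≤ δ) →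
      dist (firstVariation μ Ω G u φ) (firstVariation μ Ω G u Y) ≤ C * δ := by
  obtain ⟨C, hC⟩ := hΩb.isCompact_closure.exists_bound_of_continuousOn
    ((hG.continuous_fderiv one_ne_zero).comp (continuous_jet hu)).continuousOn
  refine ⟨C * μ.real Ω, fun φ Y hφ hY δ hδ => ?_⟩
  have hbound (x) (hx : x ∈ Ω) :
      ‖fderiv ℝ G (jet u x) (jet φ x) - fderiv ℝ G (jet u x) (jet Y x)‖ ≤ C * δ := by
    rw [← map_sub]
    exact (fderiv ℝ G (jet u x)).le_of_opNorm_le_of_le (hC x (subset_closure hx))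
      ((dist_eq_norm _ _).symm.trans_le (hδ x))
  rw [dist_eq_norm, firstVariation, firstVariation, ← integral_sub
    (integrableOn_fderiv_jet hΩb hG hu hφ) (integrableOn_fderiv_jet hΩb hG hu hY)]
  exact (norm_setIntegral_le_of_norm_le_const hΩb.measure_lt_top hbound).trans_eq (by ring)

theorem firstVariation_eq_zero_of_forall_contDiff_infty [CompleteSpace V]
    (hΩ : MeasurableSet Ω) (hΩb : Bornology.IsBounded Ω) (hG : ContDiff ℝ 1 G)
    (hu : ContDiff ℝ 1 u)
    (h : ∀ φ : E → V, ContDiff ℝ ∞ φ → HasCompactSupport φ → firstVariation μ Ω G u φ = 0)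
    {X : E → V} (hX : ContDiff ℝ 1 X) : firstVariation μ Ω G u X = 0 := by
  obtain ⟨R, hR, hΩR⟩ := hΩb.subset_ball_lt 0 0
  obtain ⟨Y, hY, hYc, hYX⟩ := exists_hasCompactSupport_eqOn_ball hX hR
  obtain ⟨C, hC⟩ := exists_dist_firstVariation_le (μ := μ) hΩb hG hu
  have hYX' : firstVariation μ Ω G u X = firstVariation μ Ω G u Y := by
    refine setIntegral_congr_fun hΩ fun x hx => ?_
    have hYx : Y =ᶠ[𝓝 x] X := hYX.eventuallyEq_of_mem (Metric.isOpen_ball.mem_nhds (hΩR hx))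
    simp only [jet, hYx.fderiv_eq, hYx.eq_of_nhds]
  have hle (δ : ℝ) (hδ : 0 < δ) : dist 0 (firstVariation μ Ω G u Y) ≤ C * δ := by
    obtain ⟨φ, hφ, hφc, hφY⟩ := exists_contDiff_hasCompactSupport_dist_jet_le hY hYc hδ
    simpa only [h φ hφ hφc] using hC φ Y (hφ.of_le (by simp)) hY δ hφY
  have hlim : Tendsto (fun δ => C * δ) (𝓝[>] 0) (𝓝 0) := by
    simpa using ((continuous_const_mul C).tendsto 0).mono_left nhdsWithin_le_nhds
  rw [hYX', ← dist_le_zero, dist_comm]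
  exact ge_of_tendsto hlim (eventually_mem_nhdsWithin.mono hle)

theorem deriv_deriv_action_of_critical [CompleteSpace V] {w : ℝ × E → V} (hΩ : MeasurableSet Ω)
    (hΩb : Bornology.IsBounded Ω) (hG : ContDiff ℝ 2 G) (hw : ∀ x, ContDiffAt ℝ 3 w (0, x))
    (hcrit : ∀ φ : E → V, ContDiff ℝ ∞ φ → HasCompactSupport φ →
      deriv (fun t : ℝ => action μ Ω G ((fun x => w (0, x)) + t • φ)) 0 = 0) :
    deriv (deriv fun t => action μ Ω G fun x => w (t, x)) 0
      = deriv (deriv fun t : ℝ =>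
          action μ Ω G ((fun x => w (0, x)) + t • fun x => timeDeriv w (0, x))) 0 := by
  have hwt (x : E) : ContDiffAt ℝ 2 (timeDeriv w) (0, x) :=
    contDiffAt_timeDeriv (hw x) (by norm_num)
  have hw₀ : ContDiff ℝ 1 fun x => w (0, x) := (contDiff_slice hw).of_le (by norm_num)
  have hG₁ : ContDiff ℝ 1 G := hG.of_le one_le_two
  have hfirst : firstVariation μ Ω G (fun x => w (0, x))
      (fun x => timeDeriv (timeDeriv w) (0, x)) = 0 :=
    firstVariation_eq_zero_of_forall_contDiff_infty hΩ hΩb hG₁ hw₀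
      (fun φ hφ hφc => by
        rw [← deriv_action_add_smul hΩ hΩb hG₁ hw₀ (hφ.of_le (by simp)), hcrit φ hφ hφc])
      (contDiff_slice fun x => contDiffAt_timeDeriv (hwt x) (by norm_num))
  rw [deriv_deriv_action hΩ hΩb hG hw, hfirst, add_zero, deriv_deriv_action_add_smul hΩ hΩb hG hw₀
    (contDiff_slice fun x => (hwt x).of_le one_le_two)]

end Density

section Deformations

theorem contDiffAt_invFun_of_eventually_injective {𝕜 P E F : Type*} [RCLike 𝕜]
    [NormedAddCommGroup P] [NormedSpace 𝕜 P] [CompleteSpace P]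
    [NormedAddCommGroup E] [NormedSpace 𝕜 E] [CompleteSpace E]
    [NormedAddCommGroup F] [NormedSpace 𝕜 F] [CompleteSpace F]
    {Φ : P → E → F} {p₀ : P} {x₀ : E} {n : WithTop ℕ∞}
    (hΦ : ContDiffAt 𝕜 n (Function.uncurry Φ) (p₀, x₀)) (hn : n ≠ 0)
    (hinv : (fderiv 𝕜 (Φ p₀) x₀).IsInvertible)
    (hinj : ∀ᶠ p in 𝓝 p₀, Function.Injective (Φ p)) :
    ContDiffAt 𝕜 n (fun q : P × F => Function.invFun (Φ q.1) q.2) (p₀, Φ p₀ x₀) := by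
  let f : (P × F) × E → F := fun z => Φ z.1.1 z.2 - z.1.2
  let z₀ : (P × F) × E := ((p₀, Φ p₀ x₀), x₀)
  have hf : ContDiffAt 𝕜 n f z₀ :=
    (hΦ.comp z₀ (contDiffAt_fst.fst.prodMk contDiffAt_snd)).sub contDiffAt_fst.snd
  have hf_inv : (fderiv 𝕜 f z₀ ∘L .inr 𝕜 (P × F) E).IsInvertible := by
    rw [← fderiv_slice (hf.differentiableAt hn)]
    simpa only [f, z₀, fderiv_sub_const] using hinv
  refine (hf.contDiffAt_implicitFunction hn hf_inv).congr_of_eventuallyEq ?_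
  filter_upwards [hf.eventually_apply_implicitFunction hn hf_inv,
    continuous_fst.continuousAt.eventually hinj] with q hq hq_inj
  have hΦq : Φ q.1 (hf.implicitFunction hn hf_inv q) = q.2 := by
    simpa only [f, z₀, sub_self, sub_eq_zero] using hq
  calc Function.invFun (Φ q.1) q.2
      = Function.invFun (Φ q.1) (Φ q.1 (hf.implicitFunction hn hf_inv q)) := by rw [hΦq]
    _ = hf.implicitFunction hn hf_inv q := Function.leftInverse_invFun hq_inj _

variable {E V : Type*} [NormedAddCommGroup E] [NormedSpace ℝ E]
  [NormedAddCommGroup V] [NormedSpace ℝ V]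

lemma timeDeriv_eq_neg_fderiv_of_eventually_const {w : ℝ × E → V} {γ : ℝ → E} {v : E} {c : V}
    {t : ℝ} (hw : DifferentiableAt ℝ w (t, γ t)) (hγ : HasDerivAt γ v t)
    (hc : ∀ᶠ s in 𝓝 t, w (s, γ s) = c) :
    timeDeriv w (t, γ t) = -fderiv ℝ (fun y => w (t, y)) (γ t) v := by
  have hsum : fderiv ℝ w (t, γ t) (1, v) = 0 :=
    (hw.hasFDerivAt.comp_hasDerivAt t ((hasDerivAt_id t).prodMk hγ)).unique
      ((hasDerivAt_const t c).congr_of_eventuallyEq hc)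
  rw [eq_neg_iff_add_eq_zero, fderiv_slice hw, ← hsum]
  simp [timeDeriv, ← map_add]

section InverseFamily

variable [CompleteSpace E] {Φ : ℝ → E → E} {u : E → V}

lemma contDiffAt_comp_invFun {n : WithTop ℕ∞} (hn : n ≠ 0) (hu : ContDiff ℝ n u)
    (hΦ : ContDiff ℝ n (Function.uncurry Φ)) (hΦ₀ : Φ 0 = id)
    (hinj : ∀ᶠ t in 𝓝 0, Function.Injective (Φ t)) (x : E) :
    ContDiffAt ℝ n (fun p : ℝ × E => u (Function.invFun (Φ p.1) p.2)) (0, x) := by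
  have hinv : (fderiv ℝ (Φ 0) x).IsInvertible := by
    rw [hΦ₀, fderiv_id]
    exact ⟨.refl ℝ E, rfl⟩
  have h := contDiffAt_invFun_of_eventually_injective hΦ.contDiffAt hn hinv hinj
  rw [hΦ₀, id_eq] at h
  exact hu.contDiffAt.comp _ h

lemma timeDeriv_comp_invFun (hu : ContDiff ℝ 1 u) (hΦ : ContDiff ℝ 1 (Function.uncurry Φ))
    (hΦ₀ : Φ 0 = id) (hinj : ∀ᶠ t in 𝓝 0, Function.Injective (Φ t)) {x v : E}
    (hv : HasDerivAt (fun t => Φ t x) v 0) :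
    timeDeriv (fun p : ℝ × E => u (Function.invFun (Φ p.1) p.2)) (0, x) = -fderiv ℝ u x v := by
  have hconst : ∀ᶠ t in 𝓝 0, u (Function.invFun (Φ t) (Φ t x)) = u x :=
    hinj.mono fun t ht => congrArg u (Function.leftInverse_invFun ht x)
  have hid : Function.invFun (id : E → E) = id :=
    funext (Function.leftInverse_invFun Function.injective_id)
  have h := timeDeriv_eq_neg_fderiv_of_eventually_const
    ((contDiffAt_comp_invFun one_ne_zero hu hΦ hΦ₀ hinj (Φ 0 x)).differentiableAt one_ne_zero)
    hv hconst
  simpa only [hΦ₀, hid, id_eq] using h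

end InverseFamily

variable [FiniteDimensional ℝ E] [MeasurableSpace E] [BorelSpace E] [CompleteSpace V]

theorem second_inner_variation_of_critical_point_general
    {μ : Measure E} [IsFiniteMeasureOnCompacts μ] {Ω : Set E} (hΩ : MeasurableSet Ω)
    (hΩb : Bornology.IsBounded Ω) {G : V × (E →L[ℝ] V) → ℝ} (hG : ContDiff ℝ 2 G)
    {u : E → V} (hu : ContDiff ℝ 3 u) {Φ : ℝ → E → E} {η : E → E}
    (hΦ : ContDiff ℝ 3 (Function.uncurry Φ)) (hΦ₀ : Φ 0 = id)
    (hΦη : ∀ x, HasDerivAt (fun t => Φ t x) (η x) 0)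
    (hinj : ∀ᶠ t in 𝓝 0, Function.Injective (Φ t))
    (hcrit : ∀ φ : E → V, ContDiff ℝ ∞ φ → HasCompactSupport φ →
      deriv (fun t : ℝ => action μ Ω G (u + t • φ)) 0 = 0) :
    deriv (deriv fun t => action μ Ω G fun x => u (Function.invFun (Φ t) x)) 0
      = deriv (deriv fun t : ℝ => action μ Ω G (u + t • fun x => -fderiv ℝ u x (η x))) 0 := by
  have : CompleteSpace E := FiniteDimensional.complete ℝ E
  have hu₀ : (fun x => u (Function.invFun (Φ 0) x)) = u := by
    rw [hΦ₀]
    exact funext fun x => congrArg u (Function.leftInverse_invFun Function.injective_id x)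
  have hvelocity (x : E) := timeDeriv_comp_invFun (hu.of_le (by norm_num))
    (hΦ.of_le (by norm_num)) hΦ₀ hinj (hΦη x)
  have h := deriv_deriv_action_of_critical hΩ hΩb hG
    (contDiffAt_comp_invFun three_ne_zero hu hΦ hΦ₀ hinj) (by rwa [hu₀])
  simpa only [hu₀, hvelocity] using h

end Deformations

section Coordinates

variable {N : ℕ} {Ω : Set (Fin N → ℝ)} {F : ℝ × (Fin N → ℝ) → ℝ} {u φ : (Fin N → ℝ) → ℝ}
  {η : (Fin N → ℝ) → (Fin N → ℝ)}

/-- The Lagrangian `F(z, p)` as a function of the value and the full derivative of a map, obtained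
by reading off the partial derivatives `p`. -/
def lagrangian (F : ℝ × (Fin N → ℝ) → ℝ) (q : ℝ × ((Fin N → ℝ) →L[ℝ] ℝ)) : ℝ :=
  F (q.1, fun i => q.2 (Pi.single i 1))

lemma contDiff_lagrangian {n : WithTop ℕ∞} (hF : ContDiff ℝ n F) : ContDiff ℝ n (lagrangian F) :=
  hF.comp (contDiff_fst.prodMk (contDiff_pi.2 fun _ => contDiff_snd.clm_apply contDiff_const))

lemma innerA_eq_action (Φ : ℝ → (Fin N → ℝ) → (Fin N → ℝ)) :
    innerA Ω F u Φ
      = fun t => action volume Ω (lagrangian F) fun x => u (Function.invFun (Φ t) x) :=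
  rfl

lemma gateauxA_eq_action (hu : Differentiable ℝ u) (hφ : Differentiable ℝ φ) :
    gateauxA Ω F u φ = fun t => action volume Ω (lagrangian F) (u + t • φ) := by
  funext t
  simp only [action, jet_add_smul (hu _) (hφ _)]
  rfl

lemma nGradDot_eq_neg_fderiv : nGradDot u η = fun x => -fderiv ℝ u x (η x) := by
  funext x
  conv_rhs => rw [pi_eq_sum_univ' (η x)]
  simp [nGradDot, pdv, mul_comm]

lemma bddUpTo_of_hasCompactSupport {V : Type*} [NormedAddCommGroup V] [NormedSpace ℝ V] {n : ℕ}
    {f : (Fin N → ℝ) → V} (hf : ContDiff ℝ n f) (hc : HasCompactSupport f) : BddUpTo n f :=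
  fun i hi => (hf.continuous_iteratedFDeriv (mod_cast hi)).bounded_above_of_compact_support
    (hc.iteratedFDeriv i)

lemma hasDerivAt_quadratic_deformation {E : Type*} [NormedAddCommGroup E] [NormedSpace ℝ E]
    (x v a : E) : HasDerivAt (fun t : ℝ => x + t • v + (t ^ 2 / 2) • a) v 0 := by
  simpa using (((hasDerivAt_id (0 : ℝ)).smul_const v).const_add x).fun_add
    ((((hasDerivAt_id (0 : ℝ)).fun_pow 2).div_const 2).smul_const a)

end Coordinates

/-- If `u` is a critical point of `A(w) := ∫_Ω F(w, ∇w)` (its first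
Gateaux variation vanishes for all admissible `φ`), then the second inner variation
`𝔄₁''(0)` equals the second Gateaux variation `d²A(u, −∇u·η)`; in particular it does not
depend on the acceleration field `ζ`. -/
theorem second_inner_variation_of_critical_point
    (N : ℕ) (Ω : Set (Fin N → ℝ)) (hΩo : IsOpen Ω) (hΩb : Bornology.IsBounded Ω)
    (F : ℝ × (Fin N → ℝ) → ℝ) (hF : ContDiff ℝ 3 F)
    (u : (Fin N → ℝ) → ℝ) (hu : ContDiff ℝ 3 u) (hub : BddUpTo 3 u)
    (η ζ : (Fin N → ℝ) → (Fin N → ℝ))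
    (hη : ContDiff ℝ 3 η) (hηb : BddUpTo 3 η)
    (hζ : ContDiff ℝ 3 ζ) (hζb : BddUpTo 3 ζ)
    (Φ : ℝ → (Fin N → ℝ) → (Fin N → ℝ))
    (hΦ : ∀ t x, Φ t x = x + t • η x + (t ^ 2 / 2) • ζ x)
    (τ : ℝ) (hτ : 0 < τ)
    (hbij : ∀ t : ℝ, |t| < τ → Function.Bijective (Φ t))
    (hcrit : ∀ φ : (Fin N → ℝ) → ℝ, ContDiff ℝ 3 φ → BddUpTo 3 φ →
      deriv (gateauxA Ω F u φ) 0 = 0) :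
    deriv (deriv (innerA Ω F u Φ)) 0
      = deriv (deriv (gateauxA Ω F u (nGradDot u η))) 0 := by
  have hΦ_eq : Φ = fun t x => x + t • η x + (t ^ 2 / 2) • ζ x := funext₂ hΦ
  have hu₁ : Differentiable ℝ u := hu.differentiable three_ne_zero
  have hη₁ : Differentiable ℝ η := hη.differentiable three_ne_zero
  have hDu : Differentiable ℝ (fderiv ℝ u) :=
    (hu.fderiv_right (m := 2) (by norm_num)).differentiable two_ne_zero
  rw [innerA_eq_action, nGradDot_eq_neg_fderiv, gateauxA_eq_action hu₁ (hDu.clm_apply hη₁).fun_neg]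
  refine second_inner_variation_of_critical_point_general hΩo.measurableSet hΩb
    (contDiff_lagrangian (hF.of_le (by norm_num))) hu ?_ ?_ ?_ ?_ fun φ hφ hφc => ?_
  · rw [hΦ_eq, Function.uncurry_def]
    fun_prop
  · funext x
    simp [hΦ]
  · simpa only [hΦ] using fun x => hasDerivAt_quadratic_deformation x (η x) (ζ x)
  · filter_upwards [Metric.ball_mem_nhds 0 hτ] with t ht
    exact (hbij t (mem_ball_zero_iff.1 ht)).injective
  · have hφ₃ : ContDiff ℝ 3 φ := contDiff_infty.1 hφ 3
    rw [← gateauxA_eq_action hu₁ (hφ₃.differentiable three_ne_zero)]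
    exact hcrit φ hφ₃ (bddUpTo_of_hasCompactSupport hφ₃ hφc)

end PaperAC
end

section
/- Let Ω ⊂ ℝ^N be open and bounded, let F : ℝ × ℝ^N → ℝ be of class C³, let u : ℝ^N → ℝ be bounded and of class C³ with bounded derivatives, and let η : ℝ^N → ℝ^N be bounded and of class C³ with bounded derivatives. Set Z := (η·∇)η and, for x ∈ Ω and t ∈ ℝ, let M_t(x) be the N×N matrix with entries (M_t(x))_{ij} := δ_{ij} + t ∂η^i/∂x_j(x) + (t²/2) ∂Z^i/∂x_j(x). For |t| small enough M_t(x) is invertible for all x ∈ Ω; define 𝔄(t) := ∫_Ω F(u(x), q_t(x)) · det M_t(x) dx, where q_t(x) ∈ ℝ^N has j-th component Σ_i ∂u/∂x_i(x) (M_t(x)⁻¹)_{ij}. Then 𝔄 is differentiable at t = 0 with 𝔄'(0) = ∫_Ω { F(u, ∇u) · div η − Σ_j F_{p_j}(u, ∇u) · (∇u·∇η)_j } dx, where (∇u·∇η)_j := Σ_i ∂u/∂x_i ∂η^i/∂x_j. -/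
open Filter MeasureTheory Topology
open scoped RealInnerProductSpace

namespace PaperAC

/-!
The integrand of `𝔄(t)` is `pullbackDensity F (u, ∇u, M_t)`, a composite of the curve of matrices
`M_t(x) = I + t∇η + (t²/2)∇Z` with a map that is `C¹` where the matrix is invertible. Since
`M_0 = I`, compactness of the closure of `Ω` gives invertibility on it for all small `t`, and a
uniform bound on the `t`-derivative of the integrand, so one may differentiate under the integral.
At `t = 0` Jacobi's formula gives `(det M_t)' = tr ∇η = div η` and `(M_t⁻¹)' = -∇η`; the quadratic
term does not contribute.
-/

open scoped Matrix Matrix.Norms.Operator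

section ParametricIntegral

variable {𝕜 X E V : Type*} [RCLike 𝕜] [TopologicalSpace X] [T2Space X] [MeasurableSpace X]
  [OpensMeasurableSpace X] {μ : Measure X} [IsFiniteMeasureOnCompacts μ] {K s : Set X}
  [NormedAddCommGroup E] [NormedSpace ℝ E] [NormedSpace 𝕜 E]
  [NormedAddCommGroup V] [NormedSpace 𝕜 V] {T : Set 𝕜} {t₀ : 𝕜}

lemma hasDerivAt_setIntegral_of_isCompact {f f' : 𝕜 → X → E} (hK : IsCompact K) (hs : s ⊆ K)
    (hT : T ∈ 𝓝 t₀) (hf : ∀ t ∈ T, ContinuousOn (f t) K)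
    (hf' : ContinuousOn (fun q : 𝕜 × X => f' q.1 q.2) (T ×ˢ K))
    (hderiv : ∀ t ∈ T, ∀ x ∈ K, HasDerivAt (f · x) (f' t x) t) :
    HasDerivAt (fun t => ∫ x in s, f t x ∂μ) (∫ x in s, f' t₀ x ∂μ) t₀ := by
  obtain ⟨ε, hε, hball⟩ := Metric.nhds_basis_closedBall.mem_iff.1 hT
  obtain ⟨C, hC⟩ := ((isCompact_closedBall t₀ ε).prod hK).exists_bound_of_continuousOn
    (hf'.mono (Set.prod_mono_left hball))
  have integrableOn {g : X → E} (hg : ContinuousOn g K) : IntegrableOn g s μ :=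
    (hg.integrableOn_compact hK).mono_set hs
  have ae_mem_K : ∀ᵐ x ∂μ.restrict s, x ∈ K :=
    ae_restrict_of_ae_restrict_of_subset hs (ae_restrict_mem hK.measurableSet)
  have hf'₀ : ContinuousOn (f' t₀) K :=
    hf'.comp (f := fun x => (t₀, x)) (by fun_prop) fun x hx => ⟨mem_of_mem_nhds hT, hx⟩
  refine (hasDerivAt_integral_of_dominated_loc_of_deriv_le (bound := fun _ => C)
    (Metric.closedBall_mem_nhds t₀ hε) ?_ (integrableOn (hf t₀ (mem_of_mem_nhds hT)))
    (integrableOn hf'₀).aestronglyMeasurable ?_ ?_ ?_).2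
  · filter_upwards [hT] with t ht using (integrableOn (hf t ht)).aestronglyMeasurable
  · filter_upwards [ae_mem_K] with x hx t ht using hC (t, x) ⟨ht, hx⟩
  · exact integrableOn_const (measure_mono hs |>.trans_lt hK.measure_lt_top).ne
  · filter_upwards [ae_mem_K] with x hx t ht using hderiv t (hball ht) x hx

lemma hasDerivAt_setIntegral_comp {g : V → E} {γ γ' : 𝕜 → X → V} (hK : IsCompact K)
    (hs : s ⊆ K) (hT : T ∈ 𝓝 t₀) (hg : ∀ t ∈ T, ∀ x ∈ K, ContDiffAt 𝕜 1 g (γ t x))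
    (hγ : Continuous fun q : 𝕜 × X => γ q.1 q.2) (hγ' : Continuous fun q : 𝕜 × X => γ' q.1 q.2)
    (hderiv : ∀ t x, HasDerivAt (γ · x) (γ' t x) t) :
    HasDerivAt (fun t => ∫ x in s, g (γ t x) ∂μ)
      (∫ x in s, fderiv 𝕜 g (γ t₀ x) (γ' t₀ x) ∂μ) t₀ := by
  refine hasDerivAt_setIntegral_of_isCompact (f' := fun t x => fderiv 𝕜 g (γ t x) (γ' t x))
    hK hs hT (fun t ht x hx => ?_) (fun q hq => ?_) fun t ht x hx => ?_
  · have hγt : Continuous (γ t) := hγ.comp (Continuous.prodMk_right t)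
    exact ((hg t ht x hx).continuousAt.comp hγt.continuousAt).continuousWithinAt
  · have hfderiv : ContinuousAt (fun r : 𝕜 × X => fderiv 𝕜 g (γ r.1 r.2)) q :=
      ((hg q.1 hq.1 q.2 hq.2).continuousAt_fderiv one_ne_zero).comp
        (f := fun r : 𝕜 × X => γ r.1 r.2) hγ.continuousAt
    exact (hfderiv.clm_apply hγ'.continuousAt).continuousWithinAt
  · exact ((hg t ht x hx).differentiableAt one_ne_zero).hasFDerivAt.comp_hasDerivAt t (hderiv t x)

end ParametricIntegral

lemma eventually_forall_isUnit {R X Y : Type*} [NormedRing R] [HasSummableGeomSeries R]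
    [TopologicalSpace X] [TopologicalSpace Y] {K : Set X} {M : Y → X → R} {y₀ : Y}
    (hK : IsCompact K) (hM : Continuous fun q : Y × X => M q.1 q.2)
    (hunit : ∀ x ∈ K, IsUnit (M y₀ x)) : ∀ᶠ y in 𝓝 y₀, ∀ x ∈ K, IsUnit (M y x) :=
  hK.eventually_forall_of_forall_eventually fun x hx =>
    hM.continuousAt.eventually (Units.isOpen.mem_nhds (hunit x hx))

section MatrixCalculus

variable {𝕜 m n : Type*} [NontriviallyNormedField 𝕜]

lemma hasDerivAt_matrix_entry [Finite m] [Finite n] {M : 𝕜 → Matrix m n 𝕜} {M' : Matrix m n 𝕜}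
    {t : 𝕜} (hM : HasDerivAt M M' t) (i : m) (j : n) :
    HasDerivAt (fun s => M s i j) (M' i j) t := by
  cases nonempty_fintype m
  cases nonempty_fintype n
  exact hasDerivAt_pi.1 (hasDerivAt_pi.1 hM i) j

lemma contDiff_matrix_entry [Fintype m] [Fintype n] {k : WithTop ℕ∞} (i : m) (j : n) :
    ContDiff 𝕜 k fun A : Matrix m n 𝕜 => A i j :=
  ContinuousLinearMap.contDiff
    ⟨Matrix.entryLinearMap 𝕜 𝕜 i j, continuous_id.matrix_elem i j⟩

variable [Fintype n] [DecidableEq n] {M : 𝕜 → Matrix n n 𝕜} {M' : Matrix n n 𝕜} {t : 𝕜}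

lemma contDiff_matrix_det {k : WithTop ℕ∞} : ContDiff 𝕜 k fun A : Matrix n n 𝕜 => A.det := by
  simp only [Matrix.det_apply]
  exact ContDiff.sum fun σ _ =>
    (contDiff_prod fun i _ => contDiff_matrix_entry (σ i) i).const_smul _

lemma sum_det_updateCol {R : Type*} [CommRing R] (A B : Matrix n n R) :
    ∑ i, (A.updateCol i (B.col i)).det = (A.adjugate * B).trace := by
  simp only [← Matrix.cramer_apply, Matrix.cramer_eq_adjugate_mulVec]
  rfl

lemma hasDerivAt_matrix_det (hM : HasDerivAt M M' t) :
    HasDerivAt (fun s => (M s).det) ((M t).adjugate * M').trace t := by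
  have det_updateCol (i : n) : ((M t).updateCol i (M'.col i)).det =
      ∑ σ : Equiv.Perm n, σ.sign • ((∏ j ∈ Finset.univ.erase i, M t (σ j) j) * M' (σ i) i) := by
    rw [Matrix.det_apply]
    refine Finset.sum_congr rfl fun σ _ => ?_
    rw [← Finset.prod_erase_mul _ _ (Finset.mem_univ i), Matrix.updateCol_self]
    congr 2
    exact Finset.prod_congr rfl fun j hj => Matrix.updateCol_ne (Finset.ne_of_mem_erase hj)
  rw [← sum_det_updateCol]
  simp only [det_updateCol, Matrix.det_apply]
  rw [Finset.sum_comm]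
  simp only [← Finset.smul_sum]
  exact HasDerivAt.fun_sum fun σ _ =>
    (HasDerivAt.fun_finsetProd fun i _ => hasDerivAt_matrix_entry hM (σ i) i).const_smul _

variable [CompleteSpace 𝕜]

-- The completeness argument is explicit because instance search does not identify the uniform
-- structure of the operator norm with the entrywise one.
instance hasSummableGeomSeries_matrix : HasSummableGeomSeries (Matrix n n 𝕜) :=
  @instHasSummableGeomSeriesOfCompleteSpace _ _ (FiniteDimensional.complete 𝕜 _)

lemma contDiffAt_matrix_inv {k : WithTop ℕ∞} {A : Matrix n n 𝕜} (hA : IsUnit A) :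
    ContDiffAt 𝕜 k (fun B : Matrix n n 𝕜 => B⁻¹) A := by
  simp only [Matrix.nonsing_inv_eq_ringInverse]
  exact contDiffAt_ringInverse 𝕜 hA.unit

lemma hasDerivAt_matrix_inv (hM : HasDerivAt M M' t) (hunit : IsUnit (M t)) :
    HasDerivAt (fun s => (M s)⁻¹) (-((M t)⁻¹ * M' * (M t)⁻¹)) t := by
  obtain ⟨A, hA⟩ := hunit
  have hinv : HasFDerivAt Ring.inverse _ (M t) := hA ▸ hasFDerivAt_ringInverse (𝕜 := 𝕜) A
  simp only [Matrix.nonsing_inv_eq_ringInverse, ← hA, Ring.inverse_unit]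
  exact hinv.comp_hasDerivAt t hM

end MatrixCalculus

/-- The density `F(w, ∇w) dy` pulled back along a map with Jacobian matrix `M`: if `z` and `p` are
the value and the gradient of `w ∘ Φ` at a point where `DΦ = M`, this is
`F(z, p·M⁻¹) det M`. -/
noncomputable def pullbackDensity {n : Type*} [Fintype n] [DecidableEq n]
    (F : ℝ × (n → ℝ) → ℝ) (q : ℝ × (n → ℝ) × Matrix n n ℝ) : ℝ :=
  F (q.1, q.2.1 ᵥ* q.2.2⁻¹) * q.2.2.det

section PullbackDensity

variable {n : Type*} [Fintype n] [DecidableEq n] {F : ℝ × (n → ℝ) → ℝ} {z : ℝ} {p : n → ℝ}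

lemma contDiffAt_pullbackDensity {k : WithTop ℕ∞} {A : Matrix n n ℝ} (hF : ContDiff ℝ k F)
    (hA : IsUnit A) : ContDiffAt ℝ k (pullbackDensity F) (z, p, A) := by
  have hmat : ContDiffAt ℝ k (fun q : ℝ × (n → ℝ) × Matrix n n ℝ => q.2.2) (z, p, A) := by
    fun_prop
  have hinv : ContDiffAt ℝ k (fun q : ℝ × (n → ℝ) × Matrix n n ℝ => q.2.2⁻¹) (z, p, A) :=
    (contDiffAt_matrix_inv hA).comp (z, p, A) hmat
  have hgrad : ContDiffAt ℝ k
      (fun q : ℝ × (n → ℝ) × Matrix n n ℝ => q.2.1 ᵥ* q.2.2⁻¹) (z, p, A) :=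
    contDiffAt_pi.2 fun j => ContDiffAt.sum fun i _ => ContDiffAt.mul (by fun_prop)
      ((contDiff_matrix_entry i j).contDiffAt.comp (z, p, A) hinv)
  have hFgrad : ContDiffAt ℝ k
      (fun q : ℝ × (n → ℝ) × Matrix n n ℝ => F (q.1, q.2.1 ᵥ* q.2.2⁻¹)) (z, p, A) :=
    hF.contDiffAt.comp (z, p, A) (contDiffAt_fst.prodMk hgrad)
  have hdet : ContDiffAt ℝ k (fun q : ℝ × (n → ℝ) × Matrix n n ℝ => q.2.2.det) (z, p, A) :=
    contDiff_matrix_det.contDiffAt.comp (z, p, A) hmat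
  exact hFgrad.mul hdet

lemma hasDerivAt_pullbackDensity {M : ℝ → Matrix n n ℝ} {M' : Matrix n n ℝ} {t : ℝ}
    (hF : DifferentiableAt ℝ F (z, p)) (hM : HasDerivAt M M' t) (hMt : M t = 1) :
    HasDerivAt (fun s => pullbackDensity F (z, p, M s))
      (F (z, p) * M'.trace - fderiv ℝ F (z, p) (0, p ᵥ* M')) t := by
  have hinv : HasDerivAt (fun s => (M s)⁻¹) (-M') t :=
    (hasDerivAt_matrix_inv hM (hMt ▸ isUnit_one)).congr_deriv (by simp [hMt])
  have hgrad : HasDerivAt (fun s => p ᵥ* (M s)⁻¹) (p ᵥ* (-M')) t :=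
    hasDerivAt_pi.2 fun j =>
      HasDerivAt.fun_sum fun i _ => (hasDerivAt_matrix_entry hinv i j).const_mul (p i)
  have hFd : HasFDerivAt F (fderiv ℝ F (z, p)) (z, p ᵥ* (M t)⁻¹) := by
    simpa [hMt] using hF.hasFDerivAt
  have hdensity := (hFd.comp_hasDerivAt t ((hasDerivAt_const t z).prodMk hgrad)).mul
    (hasDerivAt_matrix_det hM)
  refine hdensity.congr_deriv ?_
  have hneg : ((0 : ℝ), p ᵥ* (-M')) = -(0, p ᵥ* M') := by simp [Matrix.vecMul_neg]
  simp only [Function.comp_apply, hneg, map_neg, hMt, inv_one, Matrix.vecMul_one, Matrix.det_one,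
    Matrix.adjugate_one, one_mul, mul_one]
  ring

lemma fderiv_pullbackDensity_one (hF : ContDiff ℝ 1 F) (B : Matrix n n ℝ) :
    fderiv ℝ (pullbackDensity F) (z, p, 1) (0, 0, B) =
      F (z, p) * B.trace - fderiv ℝ F (z, p) (0, p ᵥ* B) := by
  let M : ℝ → Matrix n n ℝ := fun s => 1 + s • B
  have hM : HasDerivAt M B 0 :=
    (((hasDerivAt_id (0 : ℝ)).smul_const B).const_add 1).congr_deriv (one_smul ℝ B)
  have hM₀ : M 0 = 1 := by simp [M]
  have hchain : HasDerivAt (fun s => pullbackDensity F (z, p, M s))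
      (fderiv ℝ (pullbackDensity F) (z, p, 1) (0, 0, B)) 0 :=
    ((contDiffAt_pullbackDensity hF isUnit_one).differentiableAt
      one_ne_zero).hasFDerivAt.comp_hasDerivAt_of_eq 0
        ((hasDerivAt_const 0 z).prodMk ((hasDerivAt_const 0 p).prodMk hM)) (by rw [hM₀])
  exact hchain.unique (hasDerivAt_pullbackDensity (hF.differentiable one_ne_zero _) hM hM₀)

end PullbackDensity

section Deformation

variable {N : ℕ}

/-- The Jacobian matrix `∇η`, with entries `∂η^i/∂x_j`. -/
noncomputable def jacobian (η : (Fin N → ℝ) → (Fin N → ℝ)) (x : Fin N → ℝ) :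
    Matrix (Fin N) (Fin N) ℝ :=
  Matrix.of fun i j => pdv (fun z => η z i) j x

lemma defMat_eq (η W : (Fin N → ℝ) → (Fin N → ℝ)) (t : ℝ) (x : Fin N → ℝ) :
    defMat η W t x = 1 + t • jacobian η x + (t ^ 2 / 2) • jacobian W x := by
  ext i j
  simp [defMat, jacobian, Matrix.one_apply]

lemma defMat_zero (η W : (Fin N → ℝ) → (Fin N → ℝ)) (x : Fin N → ℝ) : defMat η W 0 x = 1 := by
  simp [defMat_eq]

lemma hasDerivAt_defMat (η W : (Fin N → ℝ) → (Fin N → ℝ)) (t : ℝ) (x : Fin N → ℝ) :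
    HasDerivAt (defMat η W · x) (jacobian η x + t • jacobian W x) t := by
  simp only [defMat_eq]
  have hlinear : HasDerivAt (fun s : ℝ => s • jacobian η x) (jacobian η x) t :=
    ((hasDerivAt_id t).smul_const (jacobian η x)).congr_deriv (one_smul ℝ _)
  have hquadratic : HasDerivAt (fun s : ℝ => (s ^ 2 / 2) • jacobian W x) (t • jacobian W x) t :=
    (((hasDerivAt_pow 2 t).div_const 2).smul_const (jacobian W x)).congr_deriv (by simp)
  exact (hlinear.const_add 1).add hquadratic

lemma sum_Fp_mul (F : ℝ × (Fin N → ℝ) → ℝ) (z : ℝ) (p v : Fin N → ℝ) :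
    ∑ j, Fp F j z p * v j = fderiv ℝ F (z, p) (0, v) := by
  let L := (fderiv ℝ F (z, p)).toLinearMap ∘ₗ LinearMap.inr ℝ ℝ (Fin N → ℝ)
  calc ∑ j, Fp F j z p * v j = ∑ j, v j • L (Pi.single j 1) :=
        Finset.sum_congr rfl fun j _ => mul_comm _ _
    _ = L (∑ j, v j • Pi.single j 1) := by simp only [map_sum, map_smul]
    _ = L v := congrArg L (pi_eq_sum_univ' v).symm

lemma contDiff_pdv {f : (Fin N → ℝ) → ℝ} {k m : WithTop ℕ∞} (hf : ContDiff ℝ m f)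
    (hkm : k + 1 ≤ m) (j : Fin N) : ContDiff ℝ k (pdv f j) :=
  (hf.fderiv_right hkm).clm_apply contDiff_const

lemma continuous_grad {u : (Fin N → ℝ) → ℝ} (hu : ContDiff ℝ 1 u) : Continuous (grad u) :=
  continuous_pi fun i => (contDiff_pdv hu (zero_add 1).le i).continuous

lemma continuous_jacobian {η : (Fin N → ℝ) → (Fin N → ℝ)} (hη : ContDiff ℝ 1 η) :
    Continuous (jacobian η) :=
  continuous_matrix fun i j =>
    (contDiff_pdv (contDiff_pi.1 hη i) (zero_add 1).le j).continuous

lemma contDiff_advf {η : (Fin N → ℝ) → (Fin N → ℝ)} {k m : WithTop ℕ∞} (hη : ContDiff ℝ m η)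
    (hkm : k + 1 ≤ m) : ContDiff ℝ k (advf η) :=
  contDiff_pi.2 fun i => ContDiff.sum fun j _ =>
    ((contDiff_pi.1 hη j).of_le (le_self_add.trans hkm)).mul
      (contDiff_pdv (contDiff_pi.1 hη i) hkm j)

lemma continuous_defMat {η W : (Fin N → ℝ) → (Fin N → ℝ)} (hη : ContDiff ℝ 1 η)
    (hW : ContDiff ℝ 1 W) : Continuous fun q : ℝ × (Fin N → ℝ) => defMat η W q.1 q.2 := by
  have hη_cont := continuous_jacobian hη
  have hW_cont := continuous_jacobian hW
  simp only [defMat_eq]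
  fun_prop

lemma exists_forall_isUnit_defMat {K : Set (Fin N → ℝ)} (hK : IsCompact K)
    {η W : (Fin N → ℝ) → (Fin N → ℝ)} (hη : ContDiff ℝ 1 η) (hW : ContDiff ℝ 1 W) :
    ∃ τ > (0 : ℝ), ∀ t : ℝ, |t| < τ → ∀ x ∈ K, IsUnit (defMat η W t x) := by
  have hunit : ∀ x ∈ K, IsUnit (defMat η W 0 x) := fun x _ => by simp [defMat_zero]
  simpa using Metric.eventually_nhds_iff.1
    (eventually_forall_isUnit hK (continuous_defMat hη hW) hunit)

end Deformation

theorem first_inner_variation_change_of_variables_general {N : ℕ} {Ω : Set (Fin N → ℝ)}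
    (hΩ : Bornology.IsBounded Ω) (μ : Measure (Fin N → ℝ)) [IsFiniteMeasureOnCompacts μ]
    {F : ℝ × (Fin N → ℝ) → ℝ} (hF : ContDiff ℝ 1 F) {u : (Fin N → ℝ) → ℝ} (hu : ContDiff ℝ 1 u)
    {η W : (Fin N → ℝ) → (Fin N → ℝ)} (hη : ContDiff ℝ 1 η) (hW : ContDiff ℝ 1 W) :
    ∃ τ > (0 : ℝ),
      (∀ t : ℝ, |t| < τ → ∀ x ∈ Ω, IsUnit (defMat η W t x)) ∧
      HasDerivAt
        (fun t : ℝ => ∫ x in Ω,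
          F (u x, fun j => ∑ i, pdv u i x * (defMat η W t x)⁻¹ i j) * (defMat η W t x).det ∂μ)
        (∫ x in Ω,
          (F (u x, grad u x) * (∑ i, pdv (fun z => η z i) i x)
            - ∑ j, Fp F j (u x) (grad u x)
                * (∑ i, pdv u i x * pdv (fun z => η z i) j x)) ∂μ) 0 := by
  have hK : IsCompact (closure Ω) := hΩ.isCompact_closure
  obtain ⟨τ, hτ, hunit⟩ := exists_forall_isUnit_defMat hK hη hW
  refine ⟨τ, hτ, fun t ht x hx => hunit t ht x (subset_closure hx), ?_⟩
  have hu_cont := hu.continuous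
  have hgrad_cont := continuous_grad hu
  have hη_cont := continuous_jacobian hη
  have hW_cont := continuous_jacobian hW
  have hM_cont := continuous_defMat hη hW
  have hτ_nhds : {t : ℝ | |t| < τ} ∈ 𝓝 0 :=
    (continuous_abs.tendsto' 0 0 abs_zero).eventually_lt_const hτ
  refine (hasDerivAt_setIntegral_comp (μ := μ) (g := pullbackDensity F)
    (γ := fun t x => (u x, grad u x, defMat η W t x))
    (γ' := fun t x => (0, 0, jacobian η x + t • jacobian W x)) hK subset_closure hτ_nhds
    (fun t ht x hx => contDiffAt_pullbackDensity hF (hunit t ht x hx)) (by fun_prop) (by fun_prop)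
    fun t x => (hasDerivAt_const t _).prodMk
      ((hasDerivAt_const t _).prodMk (hasDerivAt_defMat η W t x))).congr_deriv ?_
  refine integral_congr_ae (.of_forall fun x => ?_)
  simp only [defMat_zero, zero_smul, add_zero]
  exact (fderiv_pullbackDensity_one hF _).trans (congrArg _ (sum_Fp_mul F _ _ _).symm)

/-- First inner variation via change of variables: with `Z := (η·∇)η`,
`M_t(x) := I + t∇η + (t²/2)∇Z` and `𝔄(t) := ∫_Ω F(u, ∇u·M_t⁻¹) det M_t`, the matrices
`M_t(x)` are invertible on `Ω` for small `|t|` and `𝔄` is differentiable at `t = 0` with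
`𝔄'(0) = ∫_Ω {F div η − (∇_p F, ∇u·∇η)}`. -/
theorem first_inner_variation_change_of_variables
    (N : ℕ) (Ω : Set (Fin N → ℝ)) (hΩo : IsOpen Ω) (hΩb : Bornology.IsBounded Ω)
    (F : ℝ × (Fin N → ℝ) → ℝ) (hF : ContDiff ℝ 3 F)
    (u : (Fin N → ℝ) → ℝ) (hu : ContDiff ℝ 3 u) (hub : BddUpTo 3 u)
    (η : (Fin N → ℝ) → (Fin N → ℝ))
    (hη : ContDiff ℝ 3 η) (hηb : BddUpTo 3 η) :
    ∃ τ > (0 : ℝ),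
      (∀ t : ℝ, |t| < τ → ∀ x ∈ Ω, IsUnit (defMat η (advf η) t x)) ∧
      HasDerivAt
        (fun t : ℝ => ∫ x in Ω,
          F (u x, fun j => ∑ i, pdv u i x * (defMat η (advf η) t x)⁻¹ i j)
            * (defMat η (advf η) t x).det)
        (∫ x in Ω,
          (F (u x, grad u x) * (∑ i, pdv (fun z => η z i) i x)
            - ∑ j, Fp F j (u x) (grad u x)
                * (∑ i, pdv u i x * pdv (fun z => η z i) j x))) 0 := by
  exact first_inner_variation_change_of_variables_general hΩb volume (hF.of_le (by norm_num))
    (hu.of_le (by norm_num)) (hη.of_le (by norm_num)) (contDiff_advf hη (by norm_num))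

end PaperAC
end

section
/- Let Ω ⊂ ℝ^N be open and let m ≥ 1. Let (λ_n) and λ be finite Borel measures on Ω, and let ρ_n, ρ : Ω → ℝ^m be Borel measurable with |ρ_n(x)| = 1 for λ_n-a.e. x and |ρ(x)| = 1 for λ-a.e. x. Assume: (i) for every continuous compactly supported φ : Ω → ℝ^m, ∫_Ω φ(x)·ρ_n(x) dλ_n(x) → ∫_Ω φ(x)·ρ(x) dλ(x) as n → ∞; and (ii) λ_n(Ω) → λ(Ω). Then for every bounded continuous function f : Ω × S^{m−1} → ℝ, where S^{m−1} := {p ∈ ℝ^m : |p| = 1}, one has ∫_Ω f(x, ρ_n(x)) dλ_n(x) → ∫_Ω f(x, ρ(x)) dλ(x). -/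
/-!
For a continuous compactly supported field `φ` with `‖φ‖ ≤ 1`, the alignment defect `1 - ⟪φ, ρ⟫ ≥ 0`
is affine in `ρ` and controls `‖φ - ρ‖²`; choosing `φ` close to `ρ` in `L¹(λ)` makes its integral
small. Extend `f` continuously to `Ω × ℝ^m`. Replacing `f(x, ρ)` by `⟪f(x, φ) φ, ρ⟫` costs a small
constant plus multiples of defects, so `f` has majorants `c + ⟪Φ(x), p⟫` whose integrals at `p = ρ`
are as close as desired to that of `f`. The hypotheses amount to convergence for such affine
integrands; this bounds the upper limit, and applying it to `-f` bounds the lower limit.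
-/

open Filter MeasureTheory Topology
open scoped RealInnerProductSpace

namespace PaperAC

section HomogeneousExtension

variable {X E : Type*} [NormedAddCommGroup E] [NormedSpace ℝ E]

/-- The positively `1`-homogeneous extension in the second variable, to `X × E`, of a function given
on `X × S`, `S` the unit sphere of `E`. It allows `f` to be evaluated at fields that are not of unit
length; it vanishes on `X × {0}`, whatever `f` does there. -/
noncomputable def homogeneousExtension (f : X × E → ℝ) (z : X × E) : ℝ :=
  ‖z.2‖ * f (z.1, ‖z.2‖⁻¹ • z.2)

lemma homogeneousExtension_of_norm_eq_one (f : X × E → ℝ) (x : X) {p : E} (hp : ‖p‖ = 1) :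
    homogeneousExtension f (x, p) = f (x, p) := by
  simp [homogeneousExtension, hp]

lemma inv_norm_smul_mem_sphere {p : E} (hp : p ≠ 0) : ‖p‖⁻¹ • p ∈ Metric.sphere (0 : E) 1 :=
  mem_sphere_zero_iff_norm.2 (norm_smul_inv_norm (𝕜 := ℝ) hp)

lemma abs_homogeneousExtension_le {f : X × E → ℝ} {C : ℝ} {x : X}
    (hC : ∀ p ∈ Metric.sphere (0 : E) 1, |f (x, p)| ≤ C) (p : E) :
    |homogeneousExtension f (x, p)| ≤ ‖p‖ * C := by
  rcases eq_or_ne p 0 with rfl | hp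
  · simp [homogeneousExtension]
  · rw [homogeneousExtension, abs_mul, abs_norm]
    exact mul_le_mul_of_nonneg_left (hC _ (inv_norm_smul_mem_sphere hp)) (norm_nonneg p)

lemma continuousOn_homogeneousExtension [TopologicalSpace X] {f : X × E → ℝ} {Y : Set X} {C : ℝ}
    (hf : ContinuousOn f (Y ×ˢ Metric.sphere (0 : E) 1))
    (hC : ∀ z ∈ Y ×ˢ Metric.sphere (0 : E) 1, |f z| ≤ C) :
    ContinuousOn (homogeneousExtension f) (Y ×ˢ Set.univ) := by
  rintro ⟨x, p⟩ ⟨hx, -⟩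
  rcases eq_or_ne p 0 with rfl | hp
  · have hlim : Tendsto (fun z : X × E => ‖z.2‖ * C) (𝓝[Y ×ˢ Set.univ] (x, 0)) (𝓝 0) := by
      have hcont : Continuous fun z : X × E => ‖z.2‖ * C := by fun_prop
      simpa using (hcont.tendsto (x, 0)).mono_left nhdsWithin_le_nhds
    have hzero : homogeneousExtension f (x, 0) = 0 := by simp [homogeneousExtension]
    rw [ContinuousWithinAt, hzero]
    refine squeeze_zero_norm' ?_ hlim
    filter_upwards [self_mem_nhdsWithin] with z hz
    exact abs_homogeneousExtension_le (fun q hq => hC _ ⟨hz.1, hq⟩) z.2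
  · have hne : ∀ z ∈ Y ×ˢ {q : E | q ≠ 0}, ‖z.2‖ ≠ 0 := fun z hz => norm_ne_zero_iff.2 hz.2
    have hcont : ContinuousOn (homogeneousExtension f) (Y ×ˢ {q : E | q ≠ 0}) := by
      refine continuousOn_snd.norm.mul (hf.comp (continuousOn_fst.prodMk ?_) fun z hz =>
        ⟨hz.1, inv_norm_smul_mem_sphere hz.2⟩)
      exact (continuousOn_snd.norm.inv₀ hne).smul continuousOn_snd
    refine (hcont (x, p) ⟨hx, hp⟩).mono_of_mem_nhdsWithin ?_
    rw [nhdsWithin_prod_eq]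
    exact prod_mem_prod self_mem_nhdsWithin
      (mem_nhdsWithin_of_mem_nhds (isOpen_ne.mem_nhds hp))

end HomogeneousExtension

section UnitBall

variable {E : Type*} [NormedAddCommGroup E]

section Normed

variable [NormedSpace ℝ E]

/-- The radial retraction of `E` onto its closed unit ball, which turns an approximation of a unit
field into one of norm at most `1`. -/
noncomputable def unitBallRetraction (p : E) : E := (max 1 ‖p‖)⁻¹ • p

lemma continuous_unitBallRetraction : Continuous (unitBallRetraction : E → E) :=
  ((continuous_const.max continuous_norm).inv₀ fun _ =>
    (lt_max_of_lt_left one_pos).ne').smul continuous_id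

lemma unitBallRetraction_zero : unitBallRetraction (0 : E) = 0 := smul_zero _

lemma norm_unitBallRetraction_le (p : E) : ‖unitBallRetraction p‖ ≤ 1 := by
  have hpos : 0 < max 1 ‖p‖ := lt_max_of_lt_left one_pos
  rw [unitBallRetraction, norm_smul, norm_inv, Real.norm_of_nonneg hpos.le, inv_mul_le_one₀ hpos]
  exact le_max_right 1 ‖p‖

lemma norm_sub_unitBallRetraction_self (p : E) :
    ‖p - unitBallRetraction p‖ = max 1 ‖p‖ - 1 := by
  rcases le_total ‖p‖ 1 with hp | hp
  · simp [unitBallRetraction, hp]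
  · have hpos : 0 < ‖p‖ := one_pos.trans_le hp
    have hfactor : p - ‖p‖⁻¹ • p = (1 - ‖p‖⁻¹) • p := by rw [sub_smul, one_smul]
    rw [unitBallRetraction, max_eq_right hp, hfactor, norm_smul,
      Real.norm_of_nonneg (sub_nonneg.2 (inv_le_one_of_one_le₀ hp)), sub_mul, one_mul,
      inv_mul_cancel₀ hpos.ne']

lemma norm_sub_unitBallRetraction_le {p : E} (hp : ‖p‖ ≤ 1) (q : E) :
    ‖p - unitBallRetraction q‖ ≤ 2 * ‖p - q‖ := by
  have hexcess : max 1 ‖q‖ - 1 ≤ ‖p - q‖ := by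
    rw [sub_le_iff_le_add]
    refine max_le (by linarith [norm_nonneg (p - q)]) ?_
    linarith [norm_le_norm_add_norm_sub p q]
  calc ‖p - unitBallRetraction q‖
      ≤ ‖p - q‖ + ‖q - unitBallRetraction q‖ := norm_sub_le_norm_sub_add_norm_sub _ _ _
    _ ≤ 2 * ‖p - q‖ := by rw [norm_sub_unitBallRetraction_self]; linarith

end Normed

section Inner

variable [InnerProductSpace ℝ E] {p q : E}

lemma one_sub_inner_nonneg (hp : ‖p‖ = 1) (hq : ‖q‖ ≤ 1) : 0 ≤ 1 - ⟪q, p⟫ := by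
  have hinner : ⟪q, p⟫ ≤ ‖q‖ := by simpa [hp] using real_inner_le_norm q p
  linarith

lemma one_sub_inner_le_norm_sub (hp : ‖p‖ = 1) : 1 - ⟪q, p⟫ ≤ ‖p - q‖ := by
  calc 1 - ⟪q, p⟫ = ⟪p - q, p⟫ := by rw [inner_sub_left, real_inner_self_eq_norm_sq, hp, one_pow]
    _ ≤ ‖p - q‖ * ‖p‖ := real_inner_le_norm _ _
    _ = ‖p - q‖ := by rw [hp, mul_one]

lemma norm_sub_sq_le_two_mul_one_sub_inner (hp : ‖p‖ ≤ 1) (hq : ‖q‖ ≤ 1) :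
    ‖p - q‖ ^ 2 ≤ 2 * (1 - ⟪q, p⟫) := by
  rw [norm_sub_sq_real, real_inner_comm]
  linarith [pow_le_one₀ (n := 2) (norm_nonneg p) hp, pow_le_one₀ (n := 2) (norm_nonneg q) hq]

end Inner

end UnitBall

lemma exists_abs_sub_le_add_mul_dist_sq {X Y : Type*} [TopologicalSpace X] [MetricSpace Y]
    {F : X × Y → ℝ} (hF : Continuous F) {K : Set X} (hK : IsCompact K) {s : Set Y}
    (hs : IsCompact s) {η : ℝ} (hη : 0 < η) :
    ∃ A, 0 ≤ A ∧ ∀ x ∈ K, ∀ p ∈ s, ∀ q ∈ s, |F (x, p) - F (x, q)| ≤ η + A * dist p q ^ 2 := by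
  let osc : X × Y × Y → ℝ := fun z => |F (z.1, z.2.1) - F (z.1, z.2.2)|
  have hosc : Continuous osc := by fun_prop
  have hfar : IsCompact (K ×ˢ s ×ˢ s ∩ {z | η ≤ osc z}) :=
    (hK.prod (hs.prod hs)).inter_right (isClosed_le continuous_const hosc)
  have hsep : ∀ z ∈ K ×ˢ s ×ˢ s ∩ {z | η ≤ osc z}, dist z.2.1 z.2.2 ^ 2 ≠ 0 := by
    rintro ⟨x, p, q⟩ ⟨-, hz⟩ hpq
    obtain rfl : p = q := by simpa using hpq
    exact hη.not_ge (by simpa [osc] using hz)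
  obtain ⟨A, hA⟩ := hfar.exists_bound_of_continuousOn
    (f := fun z => osc z / dist z.2.1 z.2.2 ^ 2) (hosc.continuousOn.div (by fun_prop) hsep)
  refine ⟨|A|, abs_nonneg A, fun x hx p hp q hq => ?_⟩
  rcases lt_or_ge (osc (x, p, q)) η with hnear | hz
  · exact hnear.le.trans (le_add_of_nonneg_right (by positivity))
  · have hz' : (x, p, q) ∈ K ×ˢ s ×ˢ s ∩ {z | η ≤ osc z} := ⟨⟨hx, hp, hq⟩, hz⟩
    have hratio : osc (x, p, q) / dist p q ^ 2 ≤ |A| :=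
      (le_abs_self _).trans ((hA _ hz').trans (le_abs_self A))
    have hpos : 0 < dist p q ^ 2 := (sq_nonneg _).lt_of_ne' (hsep _ hz')
    linarith [(div_le_iff₀ hpos).1 hratio]

section Majorant

variable {X E : Type*} [TopologicalSpace X] [NormedAddCommGroup E] [InnerProductSpace ℝ E]
  [FiniteDimensional ℝ E]

-- Off the support of `ψ` the last term is `2 * C`, which is why `F` need only be uniformly
-- continuous over compact sets.
lemma exists_abs_sub_inner_smul_le {F : X × E → ℝ} (hF : Continuous F) {C : ℝ}
    (hC : ∀ x, ∀ p ∈ Metric.closedBall (0 : E) 1, |F (x, p)| ≤ C) {ψ : X → E}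
    (hψs : HasCompactSupport ψ) (hψ1 : ∀ x, ‖ψ x‖ ≤ 1) {η : ℝ} (hη : 0 < η) :
    ∃ k, ∀ x p q, ‖p‖ = 1 → ‖q‖ ≤ 1 →
      |F (x, p) - ⟪F (x, q) • q, p⟫| ≤
        η + k * (1 - ⟪q, p⟫) + 2 * C * (1 - ⟪ψ x, p⟫) := by
  obtain ⟨A, hA0, hA⟩ :=
    exists_abs_sub_le_add_mul_dist_sq hF hψs.isCompact (isCompact_closedBall (0 : E) 1) hη
  refine ⟨2 * A + C, fun x p q hp hq => ?_⟩
  have hpb : p ∈ Metric.closedBall (0 : E) 1 := mem_closedBall_zero_iff.2 hp.le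
  have hqb : q ∈ Metric.closedBall (0 : E) 1 := mem_closedBall_zero_iff.2 hq
  have hC0 : 0 ≤ C := (abs_nonneg _).trans (hC x q hqb)
  have hq0 := one_sub_inner_nonneg hp hq
  have hosc : |F (x, p) - F (x, q)| ≤
      η + 2 * A * (1 - ⟪q, p⟫) + 2 * C * (1 - ⟪ψ x, p⟫) := by
    by_cases hx : x ∈ tsupport ψ
    · have hψ0 := mul_nonneg hC0 (one_sub_inner_nonneg hp (hψ1 x))
      have hquad := mul_le_mul_of_nonneg_left (norm_sub_sq_le_two_mul_one_sub_inner hp.le hq) hA0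
      have hnear := hA x hx p hpb q hqb
      rw [dist_eq_norm] at hnear
      linarith
    · rw [image_eq_zero_of_notMem_tsupport hx, inner_zero_left]
      linarith [abs_sub (F (x, p)) (F (x, q)), hC x p hpb, hC x q hqb, mul_nonneg hA0 hq0]
  calc |F (x, p) - ⟪F (x, q) • q, p⟫|
      = |(F (x, p) - F (x, q)) + F (x, q) * (1 - ⟪q, p⟫)| := by
        rw [real_inner_smul_left]; ring_nf
    _ ≤ |F (x, p) - F (x, q)| + |F (x, q)| * (1 - ⟪q, p⟫) := by
        rw [← abs_of_nonneg hq0, ← abs_mul, abs_of_nonneg hq0]; exact abs_add_le _ _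
    _ ≤ η + (2 * A + C) * (1 - ⟪q, p⟫) + 2 * C * (1 - ⟪ψ x, p⟫) := by
        linarith [mul_le_mul_of_nonneg_right (hC x q hqb) hq0]

variable [MeasurableSpace X] {μ : Measure X} {ρ : X → E}

section Integrability

variable [OpensMeasurableSpace X]

lemma integrable_inner_of_hasCompactSupport (hρ : Integrable ρ μ) {Φ : X → E} (hΦ : Continuous Φ)
    (hΦs : HasCompactSupport Φ) : Integrable (fun x => ⟪Φ x, ρ x⟫) μ := by
  obtain ⟨C, hC⟩ := hΦs.exists_bound_of_continuous hΦ
  refine (hρ.norm.const_mul C).mono' (hΦ.aestronglyMeasurable.inner hρ.1) (ae_of_all _ fun x => ?_)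
  exact (norm_inner_le_norm _ _).trans (mul_le_mul_of_nonneg_right (hC x) (norm_nonneg _))

lemma integrable_comp_prodMk [IsFiniteMeasure μ] (hρ : AEStronglyMeasurable ρ μ)
    (hρ1 : ∀ᵐ x ∂μ, ‖ρ x‖ = 1) {F : X × E → ℝ} (hF : Continuous F) {C : ℝ}
    (hC : ∀ x, ∀ p ∈ Metric.closedBall (0 : E) 1, |F (x, p)| ≤ C) :
    Integrable (fun x => F (x, ρ x)) μ := by
  borelize E
  refine .of_bound (hF.measurable.comp_aemeasurable
    (aemeasurable_id.prodMk hρ.aemeasurable)).aestronglyMeasurable C ?_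
  filter_upwards [hρ1] with x hx
  exact hC x _ (mem_closedBall_zero_iff.2 hx.le)

end Integrability

variable [NormalSpace X] [R1Space X] [WeaklyLocallyCompactSpace X] [BorelSpace X] [μ.Regular]
  [IsFiniteMeasure μ]

lemma exists_hasCompactSupport_integral_one_sub_inner_le (hρ : Integrable ρ μ)
    (hρ1 : ∀ᵐ x ∂μ, ‖ρ x‖ = 1) {ε : ℝ} (hε : 0 < ε) :
    ∃ φ : X → E, Continuous φ ∧ HasCompactSupport φ ∧ (∀ x, ‖φ x‖ ≤ 1) ∧
      ∫ x, (1 - ⟪φ x, ρ x⟫) ∂μ ≤ ε := by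
  obtain ⟨g, hgs, hgε, hg, hgi⟩ := hρ.exists_hasCompactSupport_integral_sub_le (half_pos hε)
  have hφ : Continuous fun x => unitBallRetraction (g x) := continuous_unitBallRetraction.comp hg
  have hφs : HasCompactSupport fun x => unitBallRetraction (g x) :=
    hgs.comp_left (g := unitBallRetraction) unitBallRetraction_zero
  refine ⟨_, hφ, hφs, fun x => norm_unitBallRetraction_le (g x), ?_⟩
  calc ∫ x, (1 - ⟪unitBallRetraction (g x), ρ x⟫) ∂μ
      ≤ ∫ x, 2 * ‖ρ x - g x‖ ∂μ := by
        refine integral_mono_ae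
          ((integrable_const 1).sub (integrable_inner_of_hasCompactSupport hρ hφ hφs))
          ((hρ.sub hgi).norm.const_mul 2) ?_
        filter_upwards [hρ1] with x hx
        exact (one_sub_inner_le_norm_sub hx).trans (norm_sub_unitBallRetraction_le hx.le (g x))
    _ = 2 * ∫ x, ‖ρ x - g x‖ ∂μ := integral_const_mul _ _
    _ ≤ ε := by linarith

lemma exists_hasCompactSupport_mul_integral_one_sub_inner_le (hρ : Integrable ρ μ)
    (hρ1 : ∀ᵐ x ∂μ, ‖ρ x‖ = 1) (k : ℝ) {ε : ℝ} (hε : 0 < ε) :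
    ∃ φ : X → E, Continuous φ ∧ HasCompactSupport φ ∧ (∀ x, ‖φ x‖ ≤ 1) ∧
      k * ∫ x, (1 - ⟪φ x, ρ x⟫) ∂μ ≤ ε := by
  obtain ⟨δ, hδ, hkδ⟩ := exists_pos_mul_lt hε |k|
  obtain ⟨φ, hφ, hφs, hφ1, hφδ⟩ := exists_hasCompactSupport_integral_one_sub_inner_le hρ hρ1 hδ
  have hnonneg : 0 ≤ ∫ x, (1 - ⟪φ x, ρ x⟫) ∂μ := by
    refine integral_nonneg_of_ae ?_
    filter_upwards [hρ1] with x hx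
    exact one_sub_inner_nonneg hx (hφ1 x)
  refine ⟨φ, hφ, hφs, hφ1, ?_⟩
  calc k * ∫ x, (1 - ⟪φ x, ρ x⟫) ∂μ
      ≤ |k| * δ := mul_le_mul (le_abs_self k) hφδ hnonneg (abs_nonneg k)
    _ ≤ ε := hkδ.le

lemma exists_abs_sub_inner_le_integral_le (hρ : Integrable ρ μ) (hρ1 : ∀ᵐ x ∂μ, ‖ρ x‖ = 1)
    {F : X × E → ℝ} (hF : Continuous F) {C : ℝ}
    (hC : ∀ x, ∀ p ∈ Metric.closedBall (0 : E) 1, |F (x, p)| ≤ C) {ε : ℝ} (hε : 0 < ε) :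
    ∃ (Φ : X → E) (c : ℝ) (Ψ : X → E), Continuous Φ ∧ HasCompactSupport Φ ∧
      Continuous Ψ ∧ HasCompactSupport Ψ ∧
      (∀ x p, ‖p‖ = 1 → |F (x, p) - ⟪Φ x, p⟫| ≤ c + ⟪Ψ x, p⟫) ∧
      ∫ x, (c + ⟪Ψ x, ρ x⟫) ∂μ ≤ ε := by
  obtain ⟨η, hη, hηε⟩ := exists_pos_mul_lt (by linarith : 0 < ε / 3) (μ.real Set.univ)
  obtain ⟨ψ, hψ, hψs, hψ1, hψε⟩ := exists_hasCompactSupport_mul_integral_one_sub_inner_le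
    hρ hρ1 (2 * C) (by linarith : 0 < ε / 3)
  obtain ⟨k, hk⟩ := exists_abs_sub_inner_smul_le hF hC hψs hψ1 hη
  obtain ⟨φ, hφ, hφs, hφ1, hφε⟩ := exists_hasCompactSupport_mul_integral_one_sub_inner_le
    hρ hρ1 k (by linarith : 0 < ε / 3)
  have haffine : ∀ x p, η + k + 2 * C + ⟪-(k • φ x + (2 * C) • ψ x), p⟫ =
      η + k * (1 - ⟪φ x, p⟫) + 2 * C * (1 - ⟪ψ x, p⟫) := fun x p => by
    rw [inner_neg_left, inner_add_left, real_inner_smul_left, real_inner_smul_left]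
    ring
  refine ⟨fun x => F (x, φ x) • φ x, η + k + 2 * C, fun x => -(k • φ x + (2 * C) • ψ x),
    by fun_prop, hφs.smul_left, by fun_prop, ?_, fun x p hp => ?_, ?_⟩
  · exact (hφs.smul_left (f := fun _ => k)).add (hψs.smul_left (f := fun _ => 2 * C)) |>.neg
  · rw [haffine]
    exact hk x p (φ x) hp (hφ1 x)
  · have hφi : Integrable (fun x => k * (1 - ⟪φ x, ρ x⟫)) μ :=
      ((integrable_const 1).sub (integrable_inner_of_hasCompactSupport hρ hφ hφs)).const_mul k
    have hηφi : Integrable (fun x => η + k * (1 - ⟪φ x, ρ x⟫)) μ := (integrable_const η).add hφi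
    have hψi : Integrable (fun x => 2 * C * (1 - ⟪ψ x, ρ x⟫)) μ :=
      ((integrable_const 1).sub (integrable_inner_of_hasCompactSupport hρ hψ hψs)).const_mul (2 * C)
    simp_rw [haffine]
    rw [integral_add hηφi hψi, integral_add (integrable_const η) hφi,
      integral_const, smul_eq_mul, integral_const_mul, integral_const_mul]
    linarith

lemma exists_affine_majorant (hρ : Integrable ρ μ) (hρ1 : ∀ᵐ x ∂μ, ‖ρ x‖ = 1)
    {F : X × E → ℝ} (hF : Continuous F) {C : ℝ}
    (hC : ∀ x, ∀ p ∈ Metric.closedBall (0 : E) 1, |F (x, p)| ≤ C) {ε : ℝ} (hε : 0 < ε) :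
    ∃ (c : ℝ) (Φ : X → E), Continuous Φ ∧ HasCompactSupport Φ ∧
      (∀ x p, ‖p‖ = 1 → F (x, p) ≤ c + ⟪Φ x, p⟫) ∧
      ∫ x, (c + ⟪Φ x, ρ x⟫) ∂μ ≤ ∫ x, F (x, ρ x) ∂μ + ε := by
  obtain ⟨Φ, c, Ψ, hΦ, hΦs, hΨ, hΨs, hle, hΨε⟩ :=
    exists_abs_sub_inner_le_integral_le hρ hρ1 hF hC (half_pos hε)
  have hFi := integrable_comp_prodMk hρ.1 hρ1 hF hC
  have hΦΨi := integrable_inner_of_hasCompactSupport hρ (hΦ.add hΨ) (hΦs.add hΨs)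
  have hΨi : Integrable (fun x => c + ⟪Ψ x, ρ x⟫) μ :=
    (integrable_const c).add (integrable_inner_of_hasCompactSupport hρ hΨ hΨs)
  refine ⟨c, fun x => Φ x + Ψ x, hΦ.add hΨ, hΦs.add hΨs, fun x p hp => ?_, ?_⟩
  · rw [inner_add_left]
    linarith [(abs_le.1 (hle x p hp)).2]
  · calc ∫ x, (c + ⟪Φ x + Ψ x, ρ x⟫) ∂μ
        ≤ ∫ x, (F (x, ρ x) + 2 * (c + ⟪Ψ x, ρ x⟫)) ∂μ := by
          refine integral_mono_ae ((integrable_const c).add hΦΨi) (hFi.add (hΨi.const_mul 2)) ?_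
          filter_upwards [hρ1] with x hx
          rw [inner_add_left]
          linarith [(abs_le.1 (hle x (ρ x) hx)).1]
      _ = ∫ x, F (x, ρ x) ∂μ + 2 * ∫ x, (c + ⟪Ψ x, ρ x⟫) ∂μ := by
          rw [integral_add hFi (hΨi.const_mul 2), integral_const_mul]
      _ ≤ ∫ x, F (x, ρ x) ∂μ + ε := by linarith

end Majorant

section Continuity

variable {ι X E : Type*} {l : Filter ι} [TopologicalSpace X] [MeasurableSpace X] [BorelSpace X]
  [NormedAddCommGroup E] [InnerProductSpace ℝ E]

section WholeSpace

variable [FiniteDimensional ℝ E] {μ : ι → Measure X} {μ₀ : Measure X}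
  [∀ i, IsFiniteMeasure (μ i)] [IsFiniteMeasure μ₀] {ρ : ι → X → E} {ρ₀ : X → E}

lemma tendsto_integral_const_add_inner
    (hρ : ∀ i, Integrable (ρ i) (μ i)) (hρ₀ : Integrable ρ₀ μ₀)
    (hmass : Tendsto (fun i => (μ i).real Set.univ) l (𝓝 (μ₀.real Set.univ)))
    {Φ : X → E} (hΦ : Continuous Φ) (hΦs : HasCompactSupport Φ)
    (hweak : Tendsto (fun i => ∫ x, ⟪Φ x, ρ i x⟫ ∂μ i) l (𝓝 (∫ x, ⟪Φ x, ρ₀ x⟫ ∂μ₀))) (c : ℝ) :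
    Tendsto (fun i => ∫ x, (c + ⟪Φ x, ρ i x⟫) ∂μ i) l (𝓝 (∫ x, (c + ⟪Φ x, ρ₀ x⟫) ∂μ₀)) := by
  have hsplit : ∀ (ν : Measure X) [IsFiniteMeasure ν] (σ : X → E), Integrable σ ν →
      ∫ x, (c + ⟪Φ x, σ x⟫) ∂ν = ν.real Set.univ * c + ∫ x, ⟪Φ x, σ x⟫ ∂ν := fun ν _ σ hσ => by
    rw [integral_add (integrable_const c) (integrable_inner_of_hasCompactSupport hσ hΦ hΦs),
      integral_const, smul_eq_mul]
  rw [hsplit μ₀ ρ₀ hρ₀]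
  simp_rw [fun i => hsplit (μ i) (ρ i) (hρ i)]
  exact (hmass.mul_const c).add hweak

variable [NormalSpace X] [R1Space X] [WeaklyLocallyCompactSpace X] [μ₀.Regular]

lemma eventually_integral_comp_prodMk_lt
    (hρ : ∀ i, Integrable (ρ i) (μ i)) (hρ₀ : Integrable ρ₀ μ₀)
    (hρ1 : ∀ i, ∀ᵐ x ∂μ i, ‖ρ i x‖ = 1) (hρ₀1 : ∀ᵐ x ∂μ₀, ‖ρ₀ x‖ = 1)
    (hmass : Tendsto (fun i => (μ i).real Set.univ) l (𝓝 (μ₀.real Set.univ)))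
    (hweak : ∀ φ : X → E, Continuous φ → HasCompactSupport φ →
      Tendsto (fun i => ∫ x, ⟪φ x, ρ i x⟫ ∂μ i) l (𝓝 (∫ x, ⟪φ x, ρ₀ x⟫ ∂μ₀)))
    {F : X × E → ℝ} (hF : Continuous F) {C : ℝ}
    (hC : ∀ x, ∀ p ∈ Metric.closedBall (0 : E) 1, |F (x, p)| ≤ C)
    {b : ℝ} (hb : ∫ x, F (x, ρ₀ x) ∂μ₀ < b) :
    ∀ᶠ i in l, ∫ x, F (x, ρ i x) ∂μ i < b := by
  obtain ⟨c, Φ, hΦ, hΦs, hmaj, hgap⟩ :=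
    exists_affine_majorant hρ₀ hρ₀1 hF hC (half_pos (sub_pos.2 hb))
  have hlim := tendsto_integral_const_add_inner hρ hρ₀ hmass hΦ hΦs (hweak Φ hΦ hΦs) c
  filter_upwards [hlim.eventually_lt_const (by linarith : _ < b)] with i hi
  refine lt_of_le_of_lt (integral_mono_ae (integrable_comp_prodMk (hρ i).1 (hρ1 i) hF hC)
    ((integrable_const c).add (integrable_inner_of_hasCompactSupport (hρ i) hΦ hΦs)) ?_) hi
  filter_upwards [hρ1 i] with x hx
  exact hmaj x (ρ i x) hx

theorem tendsto_integral_comp_prodMk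
    (hρ : ∀ i, AEStronglyMeasurable (ρ i) (μ i)) (hρ₀ : AEStronglyMeasurable ρ₀ μ₀)
    (hρ1 : ∀ i, ∀ᵐ x ∂μ i, ‖ρ i x‖ = 1) (hρ₀1 : ∀ᵐ x ∂μ₀, ‖ρ₀ x‖ = 1)
    (hmass : Tendsto (fun i => (μ i).real Set.univ) l (𝓝 (μ₀.real Set.univ)))
    (hweak : ∀ φ : X → E, Continuous φ → HasCompactSupport φ →
      Tendsto (fun i => ∫ x, ⟪φ x, ρ i x⟫ ∂μ i) l (𝓝 (∫ x, ⟪φ x, ρ₀ x⟫ ∂μ₀)))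
    {F : X × E → ℝ} (hF : Continuous F) {C : ℝ}
    (hC : ∀ x, ∀ p ∈ Metric.closedBall (0 : E) 1, |F (x, p)| ≤ C) :
    Tendsto (fun i => ∫ x, F (x, ρ i x) ∂μ i) l (𝓝 (∫ x, F (x, ρ₀ x) ∂μ₀)) := by
  have hρi : ∀ i, Integrable (ρ i) (μ i) := fun i =>
    .of_bound (hρ i) 1 ((hρ1 i).mono fun _ => le_of_eq)
  have hρ₀i : Integrable ρ₀ μ₀ := .of_bound hρ₀ 1 (hρ₀1.mono fun _ => le_of_eq)
  refine tendsto_order.2 ⟨fun b hb => ?_, fun b hb =>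
    eventually_integral_comp_prodMk_lt hρi hρ₀i hρ1 hρ₀1 hmass hweak hF hC hb⟩
  have hneg := eventually_integral_comp_prodMk_lt (F := fun z => -F z)
    hρi hρ₀i hρ1 hρ₀1 hmass hweak hF.neg
    (fun x p hp => (abs_neg (F (x, p))).trans_le (hC x p hp)) (b := -b)
    (by rw [integral_neg]; exact neg_lt_neg hb)
  filter_upwards [hneg] with i hi
  rw [integral_neg] at hi
  exact neg_lt_neg_iff.1 hi

end WholeSpace

lemma tendsto_integral_subtype_inner [T2Space X] {Ω : Set X} (hΩ : IsOpen Ω)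
    {lam : ι → Measure X} {lam₀ : Measure X} {ρ : ι → X → E} {ρ₀ : X → E}
    (hweak : ∀ φ : X → E, Continuous φ → HasCompactSupport φ → tsupport φ ⊆ Ω →
      Tendsto (fun i => ∫ x in Ω, ⟪φ x, ρ i x⟫ ∂lam i) l (𝓝 (∫ x in Ω, ⟪φ x, ρ₀ x⟫ ∂lam₀)))
    {φ : Ω → E} (hφ : Continuous φ) (hφs : HasCompactSupport φ) :
    Tendsto (fun i => ∫ x : Ω, ⟪φ x, ρ i x⟫ ∂(lam i).comap (↑)) l
      (𝓝 (∫ x : Ω, ⟪φ x, ρ₀ x⟫ ∂lam₀.comap (↑))) := by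
  have hextend : ∀ (ν : Measure X) (σ : X → E),
      ∫ x : Ω, ⟪φ x, σ x⟫ ∂ν.comap (↑) = ∫ x in Ω, ⟪Subtype.val.extend φ 0 x, σ x⟫ ∂ν :=
    fun ν σ => by
      rw [← integral_subtype_comap hΩ.measurableSet]
      simp only [Subtype.val_injective.extend_apply]
  simp_rw [hextend]
  exact hweak _ (hφs.continuous_extend_zero hΩ hφ) (hφs.extend_zero continuous_subtype_val)
    ((hφs.tsupport_extend_zero_subset continuous_subtype_val).trans (Subtype.coe_image_subset _ _))

theorem reshetnyak_continuity_general [FiniteDimensional ℝ E] [T5Space X] [LocallyCompactSpace X]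
    {Ω : Set X} (hΩ : IsOpen Ω) {lam : ι → Measure X} {lam₀ : Measure X}
    [∀ i, IsFiniteMeasure (lam i)] [IsFiniteMeasure lam₀] [lam₀.Regular]
    {ρ : ι → X → E} {ρ₀ : X → E} (hρ : ∀ i, AEStronglyMeasurable (ρ i) ((lam i).restrict Ω))
    (hρ₀ : AEStronglyMeasurable ρ₀ (lam₀.restrict Ω))
    (hρ1 : ∀ i, ∀ᵐ x ∂(lam i).restrict Ω, ‖ρ i x‖ = 1)
    (hρ₀1 : ∀ᵐ x ∂lam₀.restrict Ω, ‖ρ₀ x‖ = 1)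
    (hweak : ∀ φ : X → E, Continuous φ → HasCompactSupport φ → tsupport φ ⊆ Ω →
      Tendsto (fun i => ∫ x in Ω, ⟪φ x, ρ i x⟫ ∂lam i) l (𝓝 (∫ x in Ω, ⟪φ x, ρ₀ x⟫ ∂lam₀)))
    (hmass : Tendsto (fun i => (lam i).real Ω) l (𝓝 (lam₀.real Ω)))
    {f : X × E → ℝ} (hf : ContinuousOn f (Ω ×ˢ Metric.sphere (0 : E) 1))
    (hfb : ∃ C : ℝ, ∀ z ∈ Ω ×ˢ Metric.sphere (0 : E) 1, |f z| ≤ C) :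
    Tendsto (fun i => ∫ x in Ω, f (x, ρ i x) ∂lam i) l (𝓝 (∫ x in Ω, f (x, ρ₀ x) ∂lam₀)) := by
  obtain ⟨C, hC⟩ := hfb
  have hΩm := hΩ.measurableSet
  have hemb := MeasurableEmbedding.subtype_coe hΩm
  have : LocallyCompactSpace Ω := hΩ.locallyCompactSpace
  have : (lam₀.comap ((↑) : Ω → X)).Regular := .comap' lam₀ hΩ.isOpenEmbedding_subtypeVal
  have hmeas : ∀ {ν : Measure X} {σ : X → E}, AEStronglyMeasurable σ (ν.restrict Ω) →
      AEStronglyMeasurable (fun x : Ω => σ x) (ν.comap (↑)) := fun hσ =>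
    hemb.aestronglyMeasurable_map_iff.1 (by rwa [map_comap_subtype_coe hΩm])
  have hreal : ∀ ν : Measure X, (ν.comap ((↑) : Ω → X)).real Set.univ = ν.real Ω := fun ν => by
    simp [Measure.real, hemb.comap_apply]
  let F : Ω × E → ℝ := fun z => homogeneousExtension f (z.1, z.2)
  have hF : Continuous F := (continuousOn_homogeneousExtension hf hC).comp_continuous
    (by fun_prop) fun z => ⟨z.1.2, trivial⟩
  have hFC : ∀ x, ∀ p ∈ Metric.closedBall (0 : E) 1, |F (x, p)| ≤ |C| := fun x p hp =>
    (abs_homogeneousExtension_le (fun q hq => (hC _ ⟨x.2, hq⟩).trans (le_abs_self C)) p).trans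
      (mul_le_of_le_one_left (abs_nonneg C) (mem_closedBall_zero_iff.1 hp))
  have hFf : ∀ {ν : Measure X} {σ : X → E}, (∀ᵐ x ∂ν.restrict Ω, ‖σ x‖ = 1) →
      ∫ x in Ω, f (x, σ x) ∂ν = ∫ x : Ω, F (x, σ x) ∂ν.comap (↑) := fun {ν σ} hσ => by
    rw [integral_subtype_comap hΩm fun x => homogeneousExtension f (x, σ x)]
    exact integral_congr_ae
      (hσ.mono fun x hx => (homogeneousExtension_of_norm_eq_one f x hx).symm)
  rw [hFf hρ₀1]
  simp_rw [fun i => hFf (hρ1 i)]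
  exact tendsto_integral_comp_prodMk (fun i => hmeas (hρ i)) (hmeas hρ₀)
    (fun i => (ae_restrict_iff_subtype hΩm).1 (hρ1 i)) ((ae_restrict_iff_subtype hΩm).1 hρ₀1)
    (by simpa only [hreal] using hmass)
    (fun _ hφ hφs => tendsto_integral_subtype_inner hΩ hweak hφ hφs) hF hFC

end Continuity

/-- Reshetnyak's continuity theorem, in polar-decomposition form: if the
vector measures `ρₙ·λₙ` converge weakly to `ρ·λ` (tested against continuous compactly
supported fields) and the total masses `λₙ(Ω)` converge to `λ(Ω)`, then
`∫_Ω f(x, ρₙ(x)) dλₙ → ∫_Ω f(x, ρ(x)) dλ` for every bounded continuous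
`f : Ω × S^{m−1} → ℝ`. -/
theorem reshetnyak_continuity
    (N m : ℕ) (hm : 1 ≤ m)
    (Ω : Set (EuclideanSpace ℝ (Fin N))) (hΩ : IsOpen Ω)
    (lam : ℕ → Measure (EuclideanSpace ℝ (Fin N)))
    (lam0 : Measure (EuclideanSpace ℝ (Fin N)))
    [∀ n, IsFiniteMeasure (lam n)] [IsFiniteMeasure lam0]
    (ρ : ℕ → EuclideanSpace ℝ (Fin N) → EuclideanSpace ℝ (Fin m))
    (ρ0 : EuclideanSpace ℝ (Fin N) → EuclideanSpace ℝ (Fin m))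
    (hρm : ∀ n, Measurable (ρ n)) (hρ0m : Measurable ρ0)
    (hρ1 : ∀ n, ∀ᵐ x ∂((lam n).restrict Ω), ‖ρ n x‖ = 1)
    (hρ01 : ∀ᵐ x ∂(lam0.restrict Ω), ‖ρ0 x‖ = 1)
    (hweak : ∀ φ : EuclideanSpace ℝ (Fin N) → EuclideanSpace ℝ (Fin m),
      Continuous φ → HasCompactSupport φ → tsupport φ ⊆ Ω →
      Tendsto (fun n => ∫ x in Ω, (∑ i, φ x i * ρ n x i) ∂(lam n)) atTop
        (𝓝 (∫ x in Ω, (∑ i, φ x i * ρ0 x i) ∂lam0)))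
    (hmass : Tendsto (fun n => (lam n Ω).toReal) atTop (𝓝 ((lam0 Ω).toReal)))
    (f : EuclideanSpace ℝ (Fin N) × EuclideanSpace ℝ (Fin m) → ℝ)
    (hf : ContinuousOn f (Ω ×ˢ Metric.sphere (0 : EuclideanSpace ℝ (Fin m)) 1))
    (hfb : ∃ C : ℝ, ∀ p ∈ Ω ×ˢ Metric.sphere (0 : EuclideanSpace ℝ (Fin m)) 1,
      |f p| ≤ C) :
    Tendsto (fun n => ∫ x in Ω, f (x, ρ n x) ∂(lam n)) atTop
      (𝓝 (∫ x in Ω, f (x, ρ0 x) ∂lam0)) := by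
  have hinner : ∀ p q : EuclideanSpace ℝ (Fin m), ∑ i, p i * q i = ⟪p, q⟫ := fun p q => by
    simp [PiLp.inner_apply, mul_comm]
  exact reshetnyak_continuity_general hΩ (fun n => (hρm n).aestronglyMeasurable)
    hρ0m.aestronglyMeasurable hρ1 hρ01 (by simpa only [hinner] using hweak) hmass hf hfb

end PaperAC
end
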